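/- Assume the Weak Chowla Conjecture: for every ε > 0 there exist infinitely many ε-near Fermat primes. Then for every finite simple graph H with at least one edge, the forbidden-subgraph property Q_n^H is evasive for all sufficiently large n (i.e., there exists N such that for all n ≥ N the Boolean function Q_n^H on the n(n-1)/2 adjacency variables has deterministic query complexity exactly n(n-1)/2). -/

import Mathlib

/-- A deterministic decision tree over a set of Boolean variables indexed by `ι`. -/
inductive DecisionTree (ι : Type) : Type
  | leaf : Bool → DecisionTree ι
  | node : ι → DecisionTree ι → DecisionTree ι → DecisionTree ι

namespace DecisionTree

/-- Evaluate a decision tree on an input assignment. -/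
def eval {ι : Type} : DecisionTree ι → (ι → Bool) → Bool
  | leaf b, _ => b
  | node i t f, x => if x i then t.eval x else f.eval x

/-- The depth (worst-case number of queries) of a decision tree. -/
def depth {ι : Type} : DecisionTree ι → ℕ
  | leaf _ => 0
  | node _ t f => max t.depth f.depth + 1

end DecisionTree

/-- The variables of a graph property on `n` vertices: pairs `i < j`. -/
def EdgeVar (n : ℕ) := {p : Fin n × Fin n // p.1 < p.2}

/-- The graph on `Fin n` determined by an assignment to the adjacency variables. -/
def graphOfInput {n : ℕ} (x : EdgeVar n → Bool) : SimpleGraph (Fin n) :=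
  SimpleGraph.fromRel (fun i j => ∃ h : i < j, x ⟨(i, j), h⟩ = true)

/-- The deterministic query (decision-tree) complexity of a set of graphs on `Fin n`,
viewed as a Boolean function of the adjacency variables. -/
noncomputable def queryComplexity {n : ℕ} (P : Set (SimpleGraph (Fin n))) : ℕ :=
  sInf {d | ∃ T : DecisionTree (EdgeVar n),
    (∀ x, T.eval x = true ↔ graphOfInput x ∈ P) ∧ T.depth ≤ d}

/-- A set of graphs on `Fin n` is evasive if its query complexity is `n(n-1)/2`,
the total number of adjacency variables. -/
def Evasive {n : ℕ} (P : Set (SimpleGraph (Fin n))) : Prop :=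
  queryComplexity P = n * (n - 1) / 2

/-- `G` contains a (not necessarily induced) subgraph isomorphic to `H`. -/
def ContainsCopy {V : Type} (H : SimpleGraph V) {W : Type} (G : SimpleGraph W) : Prop :=
  ∃ f : V → W, Function.Injective f ∧ ∀ v w : V, H.Adj v w → G.Adj (f v) (f w)

/-- The forbidden-subgraph property `Q_n^H`: graphs on `Fin n` containing no copy of `H`. -/
def ForbiddenSubgraphProperty {V : Type} (H : SimpleGraph V) (n : ℕ) :
    Set (SimpleGraph (Fin n)) :=
  {G | ¬ ContainsCopy H G}

/-- A prime `p` is an `ε`-near Fermat prime if `2^s ∣ p - 1` and `(p-1)/2^s ≤ p^ε`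
for some `s ≥ 0`. -/
def NearFermatPrime (ε : ℝ) (p : ℕ) : Prop :=
  p.Prime ∧ ∃ s : ℕ, 2 ^ s ∣ p - 1 ∧ (((p - 1) / 2 ^ s : ℕ) : ℝ) ≤ (p : ℝ) ^ ε

/-!
Suppose that a decision tree of depth less than `n * (n - 1) / 2` decides whether a graph on `n`
vertices is free of copies of `H`. Following Kahn, Saks and Sturtevant, the simplicial complex
formed by the edge sets of these graphs is then acyclic modulo 2. Smith's theorem and the Lefschetz
fixed point theorem show that the number of `H`-free graphs invariant under an extension of a
`2`-group by a cyclic group is even.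

To contradict this, write `n` as a sum of two large powers of 2, with multiplicities, and of
distinct near Fermat primes, and identify the vertices with a disjoint union of finite fields of
these orders, called blocks. The group is generated by the translations of the blocks of even order
and by a permutation which translates the blocks of prime order and multiplies those of even order
by generators of their unit groups. Large `2`-groups of units of the prime fields normalize it, so
they do not change the parity when they are added to it. An invariant graph with an edge inside a
block contains a large clique: a block of even order is then complete, and in a block of prime order
a near Fermat prime has so many units of `2`-power order that differences in this group form large
cliques. All other invariant graphs are obtained from a graph on the set of blocks, and `H`-freeness
means that this graph receives no homomorphism from `H`.

Finally, the number of graphs on a set of `m` vertices that receive no homomorphism from `H` is odd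
if `m ≡ 1` modulo `2 ^ 2 ^ t - 1`, where `2 ^ 2 ^ t` is at least the number of vertices of `H`. This
is shown for vertices replaced by cliques. Swapping two vertices with cliques of size `k` pairs up
the graphs in which they are not twins; identifying the twins leaves a clique of size `k` or `2k`
according to whether they are adjacent. Hence `2 ^ 2 ^ t` vertices with cliques of size `k` can be
traded for one of size `k` or one of size `2 ^ 2 ^ t * k`, and the latter contributes nothing.
-/

theorem even_ncard_of_involution {β : Type*} [Finite β] {S : Set β} (f : β → β)
    (hmem : ∀ b ∈ S, f b ∈ S) (hinv : ∀ b ∈ S, f (f b) = b) (hne : ∀ b ∈ S, f b ≠ b) :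
    Even S.ncard := by
  rw [Set.ncard_eq_toFinset_card S, ← ZMod.natCast_eq_zero_iff_even, ← nsmul_one,
    ← Finset.sum_const]
  refine Finset.sum_involution (fun b _ => f b) (fun _ _ => CharTwo.add_self_eq_zero _)
    (fun b hb _ => hne b ?_) (fun b hb => ?_) (fun b hb => hinv b ?_)
  all_goals simp_all

section Exact

variable {k V : Type*} [Field k] [AddCommGroup V] [Module k V]

theorem exists_comp_add_comp_eq_id (d : V →ₗ[k] V) (hd : LinearMap.ker d = LinearMap.range d) :
    ∃ h : V →ₗ[k] V, d ∘ₗ h + h ∘ₗ d = LinearMap.id := by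
  obtain ⟨s, hs⟩ := d.rangeRestrict.exists_rightInverse_of_surjective d.range_rangeRestrict
  have hds (y : LinearMap.range d) : d (s y) = y :=
    congrArg Subtype.val (LinearMap.congr_fun hs y)
  have hdd (v : V) : d (d v) = 0 := LinearMap.mem_ker.1 (hd ▸ LinearMap.mem_range_self d v)
  let p : V →ₗ[k] LinearMap.range d :=
    (LinearMap.id - s ∘ₗ d.rangeRestrict).codRestrict _ fun v =>
      hd.le (by simp [hds])
  have hpd (v : V) : p (d v) = d.rangeRestrict v := by
    have hzero : d.rangeRestrict (d v) = 0 := Subtype.ext (hdd v)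
    ext
    simp [p, hzero]
  refine ⟨s ∘ₗ p, LinearMap.ext fun v => ?_⟩
  simp [hds, hpd, p]

/-- A contraction `h` of `d` makes `γ = d (γ h) + (γ h) d` an anticommutator, and in characteristic
2 this is a commutator. -/
theorem trace_eq_zero_of_comm [CharP k 2] [Module.Finite k V] {d γ : V →ₗ[k] V}
    (hd : LinearMap.ker d = LinearMap.range d) (hγ : d ∘ₗ γ = γ ∘ₗ d) :
    LinearMap.trace k V γ = 0 := by
  obtain ⟨h, hh⟩ := exists_comp_add_comp_eq_id d hd
  calc LinearMap.trace k V γ = LinearMap.trace k V (γ ∘ₗ (d ∘ₗ h + h ∘ₗ d)) := by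
        rw [hh, LinearMap.comp_id]
    _ = LinearMap.trace k V (d ∘ₗ (γ ∘ₗ h)) + LinearMap.trace k V ((γ ∘ₗ h) ∘ₗ d) := by
        rw [LinearMap.comp_add, map_add, ← LinearMap.comp_assoc h d γ, ← hγ]
        rfl
    _ = 0 := by rw [LinearMap.trace_comp_comm', CharTwo.add_self_eq_zero]

end Exact

theorem trace_funLeft {R ι : Type*} [CommRing R] [Finite ι] (f : ι → ι) :
    LinearMap.trace R (ι → R) (LinearMap.funLeft R R f) = (Function.fixedPoints f).ncard := by
  classical
  have := Fintype.ofFinite ι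
  rw [LinearMap.trace_eq_matrix_trace R (Pi.basisFun R ι), Matrix.trace]
  simp [Pi.single_apply, ← Set.ncard_coe_finset, Function.fixedPoints, Function.IsFixedPt]

theorem forall_smul_smul_eq_iff_of_mem_normalizer {G β : Type*} [Group G] [MulAction G β]
    {P : Subgroup G} {g : G} (hg : g ∈ Subgroup.normalizer (P : Set G)) (b : β) :
    (∀ σ ∈ P, σ • g • b = g • b) ↔ ∀ σ ∈ P, σ • b = b := by
  have hconj (σ : G) (h : σ • g • b = g • b) : (g⁻¹ * σ * g) • b = b := by
    rw [mul_smul, mul_smul, h, inv_smul_smul]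
  refine ⟨fun h σ hσ => ?_, fun h σ hσ => ?_⟩
  · simpa [mul_assoc] using hconj _ (h _ ((Subgroup.mem_normalizer_iff.1 hg σ).1 hσ))
  · have := h _ ((Subgroup.mem_normalizer_iff''.1 hg σ).1 hσ)
    rwa [mul_smul, mul_smul, inv_smul_eq_iff] at this

/-- Chains with coefficients in `ZMod 2` on the full simplex with vertex set `α`, augmented by the
empty face. -/
abbrev ModTwoChain (α : Type*) := Finset α → ZMod 2

namespace ModTwoChain

open Finset
open scoped Pointwise

section Chains

variable {α : Type*}

/-- The chains supported on a family `K` of faces. The family need not be a complex. -/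
def chains (K : Set (Finset α)) : Submodule (ZMod 2) (ModTwoChain α) :=
  Submodule.pi Kᶜ fun _ => ⊥

theorem mem_chains {K : Set (Finset α)} {c : ModTwoChain α} :
    c ∈ chains K ↔ ∀ A ∉ K, c A = 0 := by
  simp [chains]

theorem chains_mono {K L : Set (Finset α)} (h : K ⊆ L) : chains K ≤ chains L :=
  fun _ hc => mem_chains.2 fun A hA => mem_chains.1 hc A fun hAK => hA (h hAK)

theorem indicator_mem_chains (K : Set (Finset α)) (c : ModTwoChain α) :
    K.indicator c ∈ chains K :=
  mem_chains.2 fun _ hA => Set.indicator_of_notMem hA c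

open Classical in
/-- A chain supported on `K` is a function on `K`. -/
noncomputable def chainsEquiv (K : Set (Finset α)) : chains K ≃ₗ[ZMod 2] (K → ZMod 2) where
  toFun c A := c.1 A
  map_add' _ _ := rfl
  map_smul' _ _ := rfl
  invFun c := ⟨fun A => if hA : A ∈ K then c ⟨A, hA⟩ else 0,
    mem_chains.2 fun A hA => by simp [hA]⟩
  left_inv c := by
    ext A
    by_cases hA : A ∈ K
    · simp [hA]
    · simp [hA, mem_chains.1 c.2 A hA]
  right_inv c := by
    ext A
    simp

/-- The component of a chain in the faces with `i` vertices. -/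
noncomputable def part (i : ℕ) (c : ModTwoChain α) : ModTwoChain α :=
  {A | #A = i}.indicator c

theorem part_apply (i : ℕ) (c : ModTwoChain α) (A : Finset α) :
    part i c A = if #A = i then c A else 0 :=
  Set.indicator_apply ..

theorem part_mem_chains {K : Set (Finset α)} (i : ℕ) {c : ModTwoChain α} (hc : c ∈ chains K) :
    part i c ∈ chains K :=
  mem_chains.2 fun A hA => by rw [part_apply, mem_chains.1 hc A hA, ite_self]

theorem part_part (i : ℕ) (c : ModTwoChain α) : part i (part i c) = part i c := by
  ext A
  simp +contextual [part_apply]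

end Chains

section Boundary

variable {α : Type*} [Fintype α] [DecidableEq α]

/-- The simplicial boundary, which sends a vertex to the empty face. -/
def boundary : ModTwoChain α →ₗ[ZMod 2] ModTwoChain α where
  toFun c B := ∑ x ∈ Bᶜ, c (insert x B)
  map_add' c c' := by ext B; simp [sum_add_distrib]
  map_smul' r c := by ext B; simp [mul_sum]

theorem boundary_apply (c : ModTwoChain α) (B : Finset α) :
    boundary c B = ∑ x ∈ Bᶜ, c (insert x B) := rfl

theorem boundary_boundary (c : ModTwoChain α) : boundary (boundary c) = 0 := by
  ext B
  simp only [boundary_apply, Pi.zero_apply]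
  rw [sum_sigma']
  refine sum_involution (fun p _ => ⟨p.2, p.1⟩) ?_ ?_ ?_ ?_
  · rintro ⟨x, y⟩ _
    rw [insert_comm]
    exact CharTwo.add_self_eq_zero _
  · rintro ⟨x, y⟩ h _ he
    simp only [mem_sigma, mem_compl, mem_insert, not_or] at h
    simp only [Sigma.mk.injEq, heq_eq_eq] at he
    exact h.2.1 he.1
  · rintro ⟨x, y⟩ h
    simp only [mem_sigma, mem_compl, mem_insert, not_or] at h ⊢
    exact ⟨h.2.2, fun e => h.2.1 e.symm, h.1⟩
  · rintro ⟨x, y⟩ _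
    rfl

theorem boundary_mem_chains {K : Set (Finset α)} (hK : IsLowerSet K) {c : ModTwoChain α}
    (hc : c ∈ chains K) : boundary c ∈ chains K :=
  mem_chains.2 fun B hB => sum_eq_zero fun x _ =>
    mem_chains.1 hc _ fun h => hB (hK (subset_insert x B) h)

theorem boundary_part_succ (i : ℕ) (c : ModTwoChain α) :
    boundary (part (i + 1) c) = part i (boundary c) := by
  ext B
  have hcard {x : α} (hx : x ∈ Bᶜ) : #(insert x B) = i + 1 ↔ #B = i := by
    rw [card_insert_of_notMem (mem_compl.1 hx), Nat.add_right_cancel_iff]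
  simp only [boundary_apply, part_apply]
  split_ifs with h
  · exact sum_congr rfl fun x hx => if_pos ((hcard hx).2 h)
  · exact sum_eq_zero fun x hx => if_neg (mt (hcard hx).1 h)

theorem boundary_part_zero (c : ModTwoChain α) : boundary (part 0 c) = 0 := by
  ext B
  simp [boundary_apply, part_apply]

/-- The family `K` has vanishing reduced homology modulo 2; for this the empty face counts as a
chain, so that the void family is acyclic and `{∅}` is not. -/
def Acyclic (K : Set (Finset α)) : Prop :=
  ∀ c ∈ chains K, boundary c = 0 → ∃ b ∈ chains K, boundary b = c

theorem acyclic_empty : Acyclic (∅ : Set (Finset α)) :=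
  fun c hc _ => ⟨0, zero_mem _, by ext A; simp [mem_chains.1 hc A]⟩

/-- Coning off at `v` is a contracting homotopy. -/
theorem acyclic_of_forall_insert_mem {K : Set (Finset α)} (v : α)
    (hv : ∀ A ∈ K, insert v A ∈ K) : Acyclic K := by
  intro c hc hd
  refine ⟨fun B => if v ∈ B then c (B.erase v) else 0, mem_chains.2 fun B hB => ?_, ?_⟩
  · refine ite_eq_right_iff.2 fun hvB => mem_chains.1 hc _ fun h => hB ?_
    simpa [insert_erase hvB] using hv _ h
  ext B
  rw [boundary_apply]
  by_cases hvB : v ∈ B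
  · have hface : ∀ x ∈ Bᶜ, (if v ∈ insert x B then c ((insert x B).erase v) else 0) =
        c (insert x (B.erase v)) := fun x hx => by
      have hxv : x ≠ v := ne_of_mem_of_not_mem hvB (mem_compl.1 hx) |>.symm
      rw [if_pos (mem_insert_of_mem hvB), erase_insert_of_ne hxv]
    have hcycle := congrFun hd (B.erase v)
    rw [boundary_apply, compl_erase, sum_insert (by simpa using hvB), insert_erase hvB,
      Pi.zero_apply] at hcycle
    rw [sum_congr rfl hface]
    exact (CharTwo.add_eq_zero.1 hcycle).symm
  · rw [sum_eq_single v]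
    · simp [erase_insert hvB]
    · intro x _ hx
      simp [hvB, hx.symm]
    · simp [hvB]

/-- The Mayer–Vietoris argument. -/
theorem Acyclic.union {K L : Set (Finset α)} (hKlow : IsLowerSet K) (hLlow : IsLowerSet L)
    (hK : Acyclic K) (hL : Acyclic L) (hKL : Acyclic (K ∩ L)) : Acyclic (K ∪ L) := by
  intro c hc hd
  obtain ⟨a, ha, b, hb, rfl⟩ : ∃ a ∈ chains K, ∃ b ∈ chains L, a + b = c := by
    refine ⟨K.indicator c, indicator_mem_chains K c, Kᶜ.indicator c, mem_chains.2 fun A hA => ?_,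
      Set.indicator_self_add_compl K c⟩
    by_cases hAK : A ∈ K
    · simp [hAK]
    · simp [mem_chains.1 hc A (by simp [hA, hAK])]
  have hab : boundary a = boundary b := CharTwo.add_eq_zero.1 (by rw [← map_add, hd])
  have hmeet : boundary a ∈ chains (K ∩ L) := mem_chains.2 fun A hA => by
    by_cases hAK : A ∈ K
    · rw [hab]
      exact mem_chains.1 (boundary_mem_chains hLlow hb) A fun h => hA ⟨hAK, h⟩
    · exact mem_chains.1 (boundary_mem_chains hKlow ha) A hAK
  obtain ⟨y, hy, hya⟩ := hKL _ hmeet (boundary_boundary _)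
  obtain ⟨a', ha', haa'⟩ := hK (a + y) (add_mem ha (chains_mono Set.inter_subset_left hy))
    (by rw [map_add, hya, CharTwo.add_self_eq_zero])
  obtain ⟨b', hb', hbb'⟩ := hL (b + y) (add_mem hb (chains_mono Set.inter_subset_right hy))
    (by rw [map_add, hya, hab, CharTwo.add_self_eq_zero])
  refine ⟨a' + b', add_mem (chains_mono Set.subset_union_left ha')
    (chains_mono Set.subset_union_right hb'), ?_⟩
  rw [map_add, haa', hbb', add_add_add_comm, CharTwo.add_self_eq_zero, add_zero]

/-- The complex is glued from the deletion and the star of `v` along the link of `v`, and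
domination makes the link a cone. -/
theorem acyclic_of_dominated {K : Set (Finset α)} (hK : IsLowerSet K) {v w : α} (hvw : v ≠ w)
    (hdom : ∀ A ∈ K, v ∈ A → insert w A ∈ K) (hdel : Acyclic {A ∈ K | v ∉ A}) : Acyclic K := by
  have hglue : K = {A ∈ K | v ∉ A} ∪ {A | insert v A ∈ K} := by
    ext A
    refine ⟨fun hA => ?_, fun hA => hA.elim And.left (hK (subset_insert v A))⟩
    by_cases hv : v ∈ A
    · exact Or.inr (by rwa [Set.mem_ofPred_eq, insert_eq_of_mem hv])
    · exact Or.inl ⟨hA, hv⟩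
  rw [hglue]
  refine Acyclic.union ?_ ?_ hdel ?_ ?_
  · exact fun A B hBA hA => ⟨hK hBA hA.1, fun hv => hA.2 (hBA hv)⟩
  · exact fun A B hBA hA => hK (insert_subset_insert v hBA) hA
  · exact acyclic_of_forall_insert_mem v fun A hA => by simpa using hA
  · refine acyclic_of_forall_insert_mem w ?_
    rintro A ⟨⟨-, hvA⟩, hvAK⟩
    have hwvA := hdom _ hvAK (mem_insert_self v A)
    refine ⟨⟨hK (insert_subset_insert w (subset_insert v A)) hwvA, by simp [hvA, hvw]⟩, ?_⟩
    simpa [insert_comm v w] using hwvA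

end Boundary

section Smith

variable {α G : Type*} [DecidableEq α] [Group G] [MulAction G α]

/-- The chain map induced by a group element acting on the vertices, as precomposition. -/
def pull (g : G) : ModTwoChain α →ₗ[ZMod 2] ModTwoChain α :=
  LinearMap.funLeft (ZMod 2) (ZMod 2) (g • · : Finset α → Finset α)

theorem pull_apply (g : G) (c : ModTwoChain α) (A : Finset α) : pull g c A = c (g • A) := rfl

theorem pull_mem_chains {K : Set (Finset α)} {g : G} (hg : ∀ A, g • A ∈ K ↔ A ∈ K)
    {c : ModTwoChain α} (hc : c ∈ chains K) : pull g c ∈ chains K :=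
  mem_chains.2 fun A hA => mem_chains.1 hc _ (mt (hg A).1 hA)

/-- A symmetric chain is a norm away from the fixed faces: keep one face of each orbit. -/
theorem exists_add_smul_eq [Finite α] {K : Set (Finset α)} {σ : G}
    (hinv : ∀ A ∈ K, σ • σ • A = A) {w : ModTwoChain α} (hw : w ∈ chains K)
    (hsymm : ∀ A, σ • A ≠ A → w (σ • A) = w A) :
    ∃ v : ModTwoChain α, (∀ A, w A = 0 → v A = 0) ∧
      ∀ A, σ • A ≠ A → v A + v (σ • A) = w A := by
  classical
  have := Fintype.ofFinite α
  let e := Fintype.equivFin (Finset α)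
  refine ⟨fun A => if e A < e (σ • A) then w A else 0, fun A hA => by simp [hA], fun A hA => ?_⟩
  dsimp only
  rw [hsymm A hA]
  by_cases hAK : A ∈ K
  · rw [hinv A hAK]
    rcases lt_or_gt_of_ne (e.injective.ne hA) with h | h
    · simp [h, h.not_gt]
    · simp [h, h.not_gt]
  · simp [mem_chains.1 hw A hAK]

variable [Fintype α]

theorem boundary_pull (g : G) (c : ModTwoChain α) : boundary (pull g c) = pull g (boundary c) := by
  ext B
  simp only [boundary_apply, pull_apply]
  refine sum_equiv (MulAction.toPerm g) (fun x => ?_) fun x _ => ?_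
  · simp
  · rw [smul_finset_def, image_insert]
    rfl

/-- The Tate differential `∂ + (1 + σ)` of an involution `σ`: the total differential of the
Tate complex of the group of order 2, with its periodicity operator set to 1. -/
def tate (σ : G) : ModTwoChain α →ₗ[ZMod 2] ModTwoChain α :=
  boundary + (LinearMap.id + pull σ)

theorem tate_apply (σ : G) (c : ModTwoChain α) (A : Finset α) :
    tate σ c A = boundary c A + (c A + c (σ • A)) := rfl

theorem tate_mem_chains {K : Set (Finset α)} (hK : IsLowerSet K) {σ : G}
    (hσ : ∀ A, σ • A ∈ K ↔ A ∈ K) {c : ModTwoChain α} (hc : c ∈ chains K) :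
    tate σ c ∈ chains K :=
  add_mem (boundary_mem_chains hK hc) (add_mem hc (pull_mem_chains hσ hc))

theorem tate_tate {K : Set (Finset α)} {σ : G} (hσ : ∀ A, σ • A ∈ K ↔ A ∈ K)
    (hinv : ∀ A ∈ K, σ • σ • A = A) {c : ModTwoChain α} (hc : c ∈ chains K) :
    tate σ (tate σ c) = 0 := by
  have hpull : pull σ (pull σ c) = c := by
    ext A
    by_cases hA : A ∈ K
    · rw [pull_apply, pull_apply, hinv A hA]
    · rw [pull_apply, pull_apply, mem_chains.1 hc A hA,
        mem_chains.1 hc _ (mt ((hσ _).trans (hσ A)).1 hA)]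
  have htate (c : ModTwoChain α) : tate σ c = boundary c + (c + pull σ c) := rfl
  simp only [htate, map_add, boundary_boundary, boundary_pull, hpull]
  linear_combination CharTwo.add_self_eq_zero (boundary c) + CharTwo.add_self_eq_zero c +
    CharTwo.add_self_eq_zero (pull σ c) + CharTwo.add_self_eq_zero (pull σ (boundary c))

/-- One step of the filtration by dimension: the lowest component of a Tate cycle is a cycle. -/
theorem boundary_part_eq_zero_of_tate_eq_zero {σ : G} {z : ModTwoChain α} (hdz : tate σ z = 0)
    {i : ℕ} (hlow : ∀ A : Finset α, #A < i → z A = 0) : boundary (part i z) = 0 := by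
  rcases i with _ | j
  · exact boundary_part_zero z
  rw [boundary_part_succ]
  ext A
  rw [part_apply, Pi.zero_apply, ite_eq_right_iff]
  intro hA
  have hzA := congrFun hdz A
  rwa [tate_apply, hlow A (by omega), hlow _ (by rw [card_smul_finset]; omega), add_zero,
    add_zero] at hzA

theorem exists_tate_eq {K : Set (Finset α)} (hK : IsLowerSet K) (hac : Acyclic K)
    {σ : G} (hσ : ∀ A, σ • A ∈ K ↔ A ∈ K) (hinv : ∀ A ∈ K, σ • σ • A = A)
    {z : ModTwoChain α} (hz : z ∈ chains K) (hdz : tate σ z = 0) :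
    ∃ w ∈ chains K, tate σ w = z := by
  suffices H : ∀ k i : ℕ, k + i = Fintype.card α + 1 → ∀ z ∈ chains K, tate σ z = 0 →
      (∀ A : Finset α, #A < i → z A = 0) → ∃ w ∈ chains K, tate σ w = z from
    H (Fintype.card α + 1) 0 (by omega) z hz hdz (by simp)
  intro k
  induction k with
  | zero =>
    intro i hi z _ _ hlow
    refine ⟨0, zero_mem _, ?_⟩
    ext A
    rw [map_zero, hlow A (by have := card_le_univ A; omega), Pi.zero_apply]
  | succ k ih =>
    intro i hi z hz hdz hlow
    obtain ⟨b, hb, hbz⟩ := hac _ (part_mem_chains i hz)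
      (boundary_part_eq_zero_of_tate_eq_zero hdz hlow)
    have hb' := part_mem_chains (i + 1) hb
    have hbd : boundary (part (i + 1) b) = part i z := by
      rw [boundary_part_succ, hbz, part_part]
    have hlow' (A : Finset α) (hA : #A < i + 1) : (z + tate σ (part (i + 1) b)) A = 0 := by
      rw [Pi.add_apply, tate_apply, hbd, part_apply, part_apply, part_apply, card_smul_finset,
        if_neg hA.ne, if_neg hA.ne, add_zero, add_zero]
      split_ifs with h
      · exact CharTwo.add_self_eq_zero _
      · rw [hlow A (by omega), add_zero]
    obtain ⟨w, hw, hwz⟩ := ih (i + 1) (by omega) _ (add_mem hz (tate_mem_chains hK hσ hb'))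
      (by rw [map_add, hdz, tate_tate hσ hinv hb', add_zero]) hlow'
    refine ⟨w + part (i + 1) b, add_mem hw hb', ?_⟩
    rw [map_add, hwz, add_assoc, CharTwo.add_self_eq_zero, add_zero]

theorem apply_smul_eq_of_tate_apply_eq_zero {K : Set (Finset α)} {σ : G}
    (hreg : IsLowerSet {A ∈ K | σ • A = A}) {w : ModTwoChain α} (hw : w ∈ chains K)
    {A : Finset α} (hA : σ • A ≠ A) (hdw : tate σ w A = 0)
    (hlow : ∀ B, σ • B ≠ B → #A < #B → w B = 0) : w (σ • A) = w A := by
  have hbw : boundary w A = 0 := by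
    refine sum_eq_zero fun x hx => ?_
    by_cases hxK : insert x A ∈ K
    · exact hlow _ (fun h => hA (hreg (subset_insert x A) ⟨hxK, h⟩).2)
        (card_lt_card (ssubset_insert (mem_compl.1 hx)))
    · exact mem_chains.1 hw _ hxK
  rw [tate_apply, hbw, zero_add] at hdw
  exact (CharTwo.add_eq_zero.1 hdw).symm

/-- Descending induction on dimension: if `w` vanishes on the moved faces with more than `k`
vertices, then on those with `k` vertices it is symmetric, hence a norm. -/
theorem exists_add_tate_apply_eq_zero {K : Set (Finset α)} (hK : IsLowerSet K) {σ : G}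
    (hσ : ∀ A, σ • A ∈ K ↔ A ∈ K) (hinv : ∀ A ∈ K, σ • σ • A = A)
    (hreg : IsLowerSet {A ∈ K | σ • A = A}) {w : ModTwoChain α} (hw : w ∈ chains K)
    (hdw : ∀ A, σ • A ≠ A → tate σ w A = 0) :
    ∃ v ∈ chains K, ∀ A, σ • A ≠ A → (w + tate σ v) A = 0 := by
  suffices H : ∀ k : ℕ, ∀ w ∈ chains K, (∀ A, σ • A ≠ A → tate σ w A = 0) →
      (∀ A, σ • A ≠ A → k ≤ #A → w A = 0) →
      ∃ v ∈ chains K, ∀ A, σ • A ≠ A → (w + tate σ v) A = 0 from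
    H (Fintype.card α + 1) w hw hdw fun A _ h => absurd (card_le_univ A) (by omega)
  intro k
  induction k with
  | zero => exact fun w _ _ hlow => ⟨0, zero_mem _, fun A hA => by simp [hlow A hA]⟩
  | succ k ih =>
    intro w hw hdw hlow
    obtain ⟨v, hvw, hv⟩ := exists_add_smul_eq hinv (part_mem_chains k hw) (σ := σ)
      fun A hA => by
        simp only [part_apply, card_smul_finset]
        exact if_ctx_congr Iff.rfl (fun h => apply_smul_eq_of_tate_apply_eq_zero hreg hw hA
          (hdw A hA) fun B hB hAB => hlow B hB (by omega)) fun _ => rfl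
    have hvK : v ∈ chains K :=
      mem_chains.2 fun A hA => hvw A (mem_chains.1 (part_mem_chains k hw) A hA)
    have hbv (A : Finset α) (hk : k ≤ #A) : boundary v A = 0 :=
      sum_eq_zero fun x hx => hvw _ <| by
        rw [part_apply, if_neg]
        rw [card_insert_of_notMem (mem_compl.1 hx)]
        omega
    obtain ⟨u, hu, hwu⟩ := ih (w + tate σ v) (add_mem hw (tate_mem_chains hK hσ hvK))
      (fun A hA => by rw [map_add, tate_tate hσ hinv hvK, add_zero, hdw A hA])
      fun A hA hk => by
        rw [Pi.add_apply, tate_apply, hbv A hk, zero_add, hv A hA, part_apply]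
        split_ifs with h
        · exact CharTwo.add_self_eq_zero _
        · rw [add_zero, hlow A hA (by omega)]
    exact ⟨v + u, add_mem hvK hu, fun A hA => by rw [map_add, ← add_assoc, hwu A hA]⟩

theorem tate_eq_boundary_of_mem_chains_fixed {K : Set (Finset α)} {σ : G} {c : ModTwoChain α}
    (hc : c ∈ chains {A ∈ K | σ • A = A}) : tate σ c = boundary c := by
  ext A
  rw [tate_apply]
  by_cases hA : σ • A = A
  · rw [hA, CharTwo.add_self_eq_zero, add_zero]
  · rw [mem_chains.1 hc A fun h => hA h.2,
      mem_chains.1 hc _ fun h => hA (smul_left_cancel σ h.2), add_zero, add_zero]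

theorem Acyclic.fixed_of_involutive {K : Set (Finset α)} (hac : Acyclic K) (hK : IsLowerSet K)
    {σ : G} (hσ : ∀ A, σ • A ∈ K ↔ A ∈ K) (hinv : ∀ A ∈ K, σ • σ • A = A)
    (hreg : IsLowerSet {A ∈ K | σ • A = A}) : Acyclic {A ∈ K | σ • A = A} := by
  intro z hz hdz
  obtain ⟨w, hw, hwz⟩ := exists_tate_eq hK hac hσ hinv
    (chains_mono (fun _ hA => hA.1) hz) ((tate_eq_boundary_of_mem_chains_fixed hz).trans hdz)
  obtain ⟨v, hv, hwv⟩ := exists_add_tate_apply_eq_zero hK hσ hinv hreg hw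
    fun A hA => by rw [hwz]; exact mem_chains.1 hz A fun h => hA h.2
  have hfix : w + tate σ v ∈ chains {A ∈ K | σ • A = A} := by
    refine mem_chains.2 fun A hA => ?_
    by_cases hσA : σ • A = A
    · exact mem_chains.1 (add_mem hw (tate_mem_chains hK hσ hv)) A fun h => hA ⟨h, hσA⟩
    · exact hwv A hσA
  refine ⟨_, hfix, ?_⟩
  rw [← tate_eq_boundary_of_mem_chains_fixed hfix, map_add, tate_tate hσ hinv hv, add_zero, hwz]

theorem Acyclic.fixed_of_index_eq_two {K : Set (Finset α)} (hK : IsLowerSet K)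
    (hGK : ∀ (σ : G) (A : Finset α), σ • A ∈ K ↔ A ∈ K)
    (hreg : ∀ σ : G, IsLowerSet {A ∈ K | σ • A = A}) {Q : Subgroup G} (hQ : Q.index = 2)
    (hac : Acyclic {A ∈ K | ∀ τ ∈ Q, τ • A = A}) : Acyclic {A ∈ K | ∀ σ : G, σ • A = A} := by
  have hnormal := Subgroup.normal_of_index_eq_two hQ
  obtain ⟨σ, hσ⟩ := (Subgroup.index_eq_two_iff_exists_notMem_and.1 hQ).imp fun _ h => h.1
  have hL : IsLowerSet {A ∈ K | ∀ τ ∈ Q, τ • A = A} := fun A B hBA hA =>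
    ⟨hK hBA hA.1, fun τ hτ => (hreg τ hBA ⟨hA.1, hA.2 τ hτ⟩).2⟩
  have hσL (A : Finset α) :
      σ • A ∈ {A ∈ K | ∀ τ ∈ Q, τ • A = A} ↔ A ∈ {A ∈ K | ∀ τ ∈ Q, τ • A = A} := by
    refine and_congr (hGK σ A) ⟨fun h τ hτ => ?_, fun h τ hτ => ?_⟩
    · have := h _ (hnormal.conj_mem τ hτ σ)
      rwa [← mul_smul, inv_mul_cancel_right, mul_smul, smul_left_cancel_iff] at this
    · have := h _ (hnormal.conj_mem' τ hτ σ)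
      rwa [mul_smul, mul_smul, inv_smul_eq_iff] at this
  convert hac.fixed_of_involutive hL hσL
    (fun A hA => by rw [← mul_smul, hA.2 _ (Subgroup.mul_self_mem_of_index_two hQ σ)])
    (fun A B hBA hA => ⟨hL hBA hA.1, (hreg σ hBA ⟨hA.1.1, hA.2⟩).2⟩) using 1
  ext A
  refine ⟨fun hA => ⟨⟨hA.1, fun τ _ => hA.2 τ⟩, hA.2 σ⟩, fun hA => ⟨hA.1.1, fun τ => ?_⟩⟩
  by_cases hτ : τ ∈ Q
  · exact hA.1.2 τ hτ
  · have hστ : σ⁻¹ * τ ∈ Q := (Subgroup.mul_mem_iff_of_index_two hQ).2 (by simp [hσ, hτ])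
    have := hA.1.2 _ hστ
    rwa [mul_smul, inv_smul_eq_iff, hA.2] at this

/-- Smith's theorem. -/
theorem Acyclic.fixed_of_isPGroup {K : Set (Finset α)} (hac : Acyclic K) (hK : IsLowerSet K)
    [Finite G] (hG : IsPGroup 2 G) (hGK : ∀ (σ : G) (A : Finset α), σ • A ∈ K ↔ A ∈ K)
    (hreg : ∀ σ : G, IsLowerSet {A ∈ K | σ • A = A}) :
    Acyclic {A ∈ K | ∀ σ : G, σ • A = A} := by
  obtain ⟨n, hn⟩ := IsPGroup.iff_card.1 hG
  clear hG
  induction n generalizing G with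
  | zero =>
    have := (Nat.card_eq_one_iff_unique.1 hn).1
    simpa [Subsingleton.elim _ (1 : G)] using hac
  | succ n ih =>
    obtain ⟨Q, hQ⟩ := Sylow.exists_subgroup_card_pow_prime (G := G) 2 (n := n)
      (hn ▸ pow_dvd_pow 2 n.le_succ)
    have hindex : Q.index = 2 := by
      have := Q.card_mul_index
      rw [hQ, hn, pow_succ] at this
      exact Nat.eq_of_mul_eq_mul_left (by positivity) this
    refine Acyclic.fixed_of_index_eq_two hK hGK hreg hindex ?_
    simpa [Subgroup.smul_def] using ih (G := Q) (fun τ => hGK τ) (fun τ => hreg τ) hQ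

/-- The **Lefschetz fixed point theorem** modulo 2. -/
theorem Acyclic.even_ncard_fixed {K : Set (Finset α)} (hac : Acyclic K) (hK : IsLowerSet K)
    {g : G} (hg : ∀ A, g • A ∈ K ↔ A ∈ K) : Even {A ∈ K | g • A = A}.ncard := by
  let d := boundary.restrict (p := chains K) fun _ => boundary_mem_chains hK
  let γ := (pull g).restrict (p := chains K) fun _ => pull_mem_chains hg
  have hd : LinearMap.ker d = LinearMap.range d := by
    ext c
    refine ⟨fun hc => ?_, ?_⟩
    · obtain ⟨b, hb, hbc⟩ := hac c c.2 (congrArg Subtype.val (LinearMap.mem_ker.1 hc))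
      exact ⟨⟨b, hb⟩, Subtype.ext hbc⟩
    · rintro ⟨b, rfl⟩
      exact Subtype.ext (boundary_boundary b.1)
  have hdγ : d ∘ₗ γ = γ ∘ₗ d := LinearMap.ext fun c => Subtype.ext (boundary_pull g c.1)
  let f : K → K := fun A => ⟨g • A, (hg A).2 A.2⟩
  have hconj : (chainsEquiv K).conj γ = LinearMap.funLeft (ZMod 2) (ZMod 2) f := by
    refine LinearMap.ext fun c => ?_
    obtain ⟨c, rfl⟩ := (chainsEquiv K).surjective c
    rw [LinearEquiv.conj_apply_apply, LinearEquiv.symm_apply_apply]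
    rfl
  have hncard : {A ∈ K | g • A = A}.ncard = (Function.fixedPoints f).ncard := by
    rw [← Set.ncard_image_of_injective _ Subtype.val_injective]
    congr 1
    ext A
    simp [f, Function.mem_fixedPoints, Function.IsFixedPt, Subtype.ext_iff, and_comm]
  rw [hncard, ← ZMod.natCast_eq_zero_iff_even, ← trace_funLeft, ← hconj, LinearMap.trace_conj',
    trace_eq_zero_of_comm hd hdγ]

end Smith

section OrderComplex

variable {β : Type*} [PartialOrder β]

/-- The order complex of a subset of a partial order: its faces are the finite chains. -/
def orderComplex (Q : Set β) : Set (Finset β) :=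
  {𝒜 | (𝒜 : Set β) ⊆ Q ∧ IsChain (· ≤ ·) (𝒜 : Set β)}

theorem isLowerSet_orderComplex (Q : Set β) : IsLowerSet (orderComplex Q) :=
  fun _ _ h h𝒜 => ⟨(coe_subset.2 h).trans h𝒜.1, h𝒜.2.mono (coe_subset.2 h)⟩

theorem orderComplex_mono {Q R : Set β} (h : Q ⊆ R) : orderComplex Q ⊆ orderComplex R :=
  fun _ h𝒜 => ⟨h𝒜.1.trans h, h𝒜.2⟩

theorem insert_mem_orderComplex [DecidableEq β] {Q : Set β} {𝒜 : Finset β} {b : β}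
    (h𝒜 : 𝒜 ∈ orderComplex Q) (hb : b ∈ Q) (h : ∀ a ∈ 𝒜, a ≤ b ∨ b ≤ a) :
    insert b 𝒜 ∈ orderComplex Q := by
  simp only [orderComplex, Set.mem_ofPred_eq, coe_insert]
  exact ⟨Set.insert_subset hb h𝒜.1, h𝒜.2.insert fun a ha _ => (h a ha).symm⟩

theorem orderComplex_sdiff_singleton (Q : Set β) (b : β) :
    orderComplex (Q \ {b}) = {𝒜 ∈ orderComplex Q | b ∉ 𝒜} := by
  ext 𝒜
  simp only [orderComplex, Set.mem_ofPred_eq, Set.subset_sdiff, Set.disjoint_singleton_right,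
    mem_coe, and_right_comm]

theorem orderComplex_empty : orderComplex (∅ : Set β) = {∅} := by
  ext 𝒜
  simp +contextual [orderComplex, Set.subset_empty_iff]

theorem orderComplex_mem_of_maximal [DecidableEq β] {Q : Set β} {a : β}
    (ha : Maximal (· ∈ Q) a) :
    {𝒜 ∈ orderComplex Q | a ∈ 𝒜} = insert a '' orderComplex {b ∈ Q | b < a} := by
  ext 𝒜
  constructor
  · rintro ⟨h𝒜, ha𝒜⟩
    refine ⟨𝒜.erase a, ⟨fun b hb => ?_, h𝒜.2.mono (coe_subset.2 (erase_subset a 𝒜))⟩,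
      insert_erase ha𝒜⟩
    obtain ⟨hba, hb𝒜⟩ := mem_erase.1 hb
    refine ⟨h𝒜.1 hb𝒜, lt_of_le_of_ne ?_ hba⟩
    exact (h𝒜.2.total hb𝒜 ha𝒜).elim id fun h => ha.2 (h𝒜.1 hb𝒜) h
  · rintro ⟨ℬ, hℬ, rfl⟩
    exact ⟨insert_mem_orderComplex (orderComplex_mono (fun b hb => hb.1) hℬ) ha.1
      fun b hb => Or.inl (hℬ.1 hb).2.le, mem_insert_self a ℬ⟩

theorem ncard_orderComplex_of_maximal [Finite β] {Q : Set β} {a : β} (ha : Maximal (· ∈ Q) a) :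
    (orderComplex Q).ncard =
      (orderComplex (Q \ {a})).ncard + (orderComplex {b ∈ Q | b < a}).ncard := by
  classical
  have hinj : Set.InjOn (insert a) (orderComplex {b ∈ Q | b < a}) := by
    have hnot {ℬ : Finset β} (hℬ : ℬ ∈ orderComplex {b ∈ Q | b < a}) : a ∉ ℬ :=
      fun h => (hℬ.1 h).2.false
    intro ℬ hℬ 𝒞 h𝒞 h
    rw [← erase_insert (hnot hℬ), h, erase_insert (hnot h𝒞)]
  rw [← hinj.ncard_image, ← orderComplex_mem_of_maximal ha, orderComplex_sdiff_singleton, add_comm]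
  exact (Set.ncard_inter_add_ncard_sdiff_eq_ncard (orderComplex Q) {𝒜 | a ∈ 𝒜}).symm

theorem even_ncard_orderComplex_iff [Finite β] {Q : Set β}
    (hQ : ∀ a ∈ Q, Even {b ∈ Q | b < a}.ncard) :
    Even (orderComplex Q).ncard ↔ Odd Q.ncard := by
  induction hn : Q.ncard using Nat.strong_induction_on generalizing Q with
  | _ n ih =>
  rcases Q.eq_empty_or_nonempty with rfl | hne
  · simp [orderComplex_empty, ← hn]
  obtain ⟨a, ha⟩ := Q.toFinite.exists_maximal hne
  have hdel : ∀ b ∈ Q, {c ∈ Q \ {a} | c < b} = {c ∈ Q | c < b} := fun b hb => by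
    ext c
    refine ⟨fun hc => ⟨hc.1.1, hc.2⟩, fun hc => ⟨⟨hc.1, ?_⟩, hc.2⟩⟩
    rintro rfl
    exact ha.not_gt hb hc.2
  have hbelow : ∀ b ∈ {b ∈ Q | b < a}, {c ∈ {b ∈ Q | b < a} | c < b} = {c ∈ Q | c < b} :=
    fun b hb => by
      ext c
      exact ⟨fun hc => ⟨hc.1.1, hc.2⟩, fun hc => ⟨⟨hc.1, hc.2.trans hb.2⟩, hc.2⟩⟩
  have hcard := Set.ncard_sdiff_singleton_add_one ha.1
  have hlt : {b ∈ Q | b < a}.ncard < n :=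
    hn ▸ Set.ncard_lt_ncard ⟨fun b hb => hb.1, fun h => (h ha.1).2.false⟩
  rw [ncard_orderComplex_of_maximal ha, Nat.even_add,
    ih _ (by omega) (fun b hb => by rw [hdel b hb.1]; exact hQ b hb.1) rfl,
    ih _ hlt (fun b hb => by rw [hbelow b hb]; exact hQ b hb.1) rfl,
    ← hn, ← hcard, Nat.odd_add_one, iff_false_right (Nat.not_odd_iff_even.2 (hQ a ha.1))]

end OrderComplex

theorem acyclic_orderComplex_of_sup_mem {β : Type*} [SemilatticeSup β] [Fintype β]
    [DecidableEq β] {x : β} {Q : Set β} (hx : x ∈ Q) (hsup : ∀ a ∈ Q, a ⊔ x ∈ Q) :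
    Acyclic (orderComplex Q) := by
  induction hk : {a ∈ Q | ¬ x ≤ a}.ncard generalizing Q with
  | zero =>
    rw [Set.ncard_eq_zero] at hk
    refine acyclic_of_forall_insert_mem x fun 𝒜 h𝒜 => insert_mem_orderComplex h𝒜 hx fun a ha =>
      Or.inr ?_
    by_contra hxa
    exact hk.subset ⟨h𝒜.1 ha, hxa⟩
  | succ k ih =>
    obtain ⟨a, ha, hmax⟩ := (Set.toFinite {a ∈ Q | ¬ x ≤ a}).exists_maximal
      ((Set.ncard_pos (Set.toFinite _)).1 (by omega))
    have hne : a ≠ a ⊔ x := fun h => ha.2 (sup_eq_left.1 h.symm)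
    refine acyclic_of_dominated (v := a) (isLowerSet_orderComplex Q) hne
      (fun 𝒜 h𝒜 ha𝒜 => insert_mem_orderComplex h𝒜 (hsup a ha.1) fun b hb => ?_) ?_
    · rcases h𝒜.2.total hb ha𝒜 with hba | hab
      · exact Or.inl (le_sup_of_le_left hba)
      · by_cases hxb : x ≤ b
        · exact Or.inr (sup_le hab hxb)
        · exact Or.inl (le_sup_of_le_left (hmax ⟨h𝒜.1 hb, hxb⟩ hab))
    · rw [← orderComplex_sdiff_singleton]
      refine ih ⟨hx, ?_⟩ (fun b hb => ⟨hsup b hb.1, ?_⟩) ?_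
      · rintro rfl
        exact ha.2 le_rfl
      · rintro rfl
        exact ha.2 le_sup_right
      · have : {b ∈ Q \ {a} | ¬ x ≤ b} = {b ∈ Q | ¬ x ≤ b} \ {a} := by
          ext b
          exact and_right_comm
        rw [this, Set.ncard_sdiff_singleton_of_mem ha, hk, Nat.add_sub_cancel]

theorem even_ncard_lt_of_sdiff_mem {β : Type*} [GeneralizedBooleanAlgebra β] [Finite β]
    {J : Set β} (hJ : ∀ a ∈ J, ∀ b ∈ J, a \ b ∈ J) {a : β} (ha : a ∈ J) :
    Even {b ∈ J \ {⊥} | b < a}.ncard := by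
  refine even_ncard_of_involution (a \ ·) ?_ ?_ ?_
  · rintro b ⟨⟨hbJ, hb0⟩, hba⟩
    exact ⟨⟨hJ a ha b hbJ, fun h => hba.not_ge (sdiff_eq_bot_iff.1 h)⟩, sdiff_lt hba.le hb0⟩
  · rintro b ⟨-, hba⟩
    exact sdiff_sdiff_eq_self hba.le
  · rintro b ⟨⟨-, hb0⟩, -⟩ h
    exact hb0 (disjoint_self.1 (h ▸ disjoint_sdiff_self_left :))

section Subdivision

variable {X : Type*}

/-- The barycentric subdivision of a simplicial complex whose faces, including the empty one, are
listed by `Γ`. The subdivision is void if `Γ` is, and is `{∅}` if `Γ` is `{∅}`. -/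
def subdivision (Γ : Set (Finset X)) : Set (Finset (Finset X)) :=
  {𝒜 ∈ orderComplex (Γ \ {∅}) | ∅ ∈ Γ}

theorem isLowerSet_subdivision (Γ : Set (Finset X)) : IsLowerSet (subdivision Γ) :=
  fun _ _ h h𝒜 => ⟨isLowerSet_orderComplex _ h h𝒜.1, h𝒜.2⟩

theorem subdivision_of_empty_mem {Γ : Set (Finset X)} (h : ∅ ∈ Γ) :
    subdivision Γ = orderComplex (Γ \ {∅}) :=
  Set.ext fun _ => and_iff_left h

theorem subdivision_of_empty_notMem {Γ : Set (Finset X)} (h : ∅ ∉ Γ) : subdivision Γ = ∅ :=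
  Set.eq_empty_of_forall_notMem fun _ h𝒜 => h h𝒜.2

theorem subdivision_mono {Γ Γ' : Set (Finset X)} (h : Γ ⊆ Γ') : subdivision Γ ⊆ subdivision Γ' :=
  fun _ h𝒜 => ⟨orderComplex_mono (Set.sdiff_subset_sdiff_left h) h𝒜.1, h h𝒜.2⟩

theorem subdivision_inter (Γ Γ' : Set (Finset X)) :
    subdivision (Γ ∩ Γ') = subdivision Γ ∩ subdivision Γ' :=
  subset_antisymm
    (Set.subset_inter (subdivision_mono Set.inter_subset_left)
      (subdivision_mono Set.inter_subset_right))
    fun _ h => ⟨⟨fun _ hA => ⟨⟨(h.1.1.1 hA).1, (h.2.1.1 hA).1⟩, (h.1.1.1 hA).2⟩, h.1.1.2⟩,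
      h.1.2, h.2.2⟩

variable [DecidableEq X]

theorem subdivision_eq_deletion_union_star {Γ : Set (Finset X)} (hΓ : IsLowerSet Γ) (x : X) :
    subdivision Γ = subdivision {A ∈ Γ | x ∉ A} ∪ subdivision {A | insert x A ∈ Γ} := by
  refine subset_antisymm (fun 𝒜 h𝒜 => ?_) (Set.union_subset
    (subdivision_mono fun A hA => hA.1) (subdivision_mono fun A hA => hΓ (subset_insert x A) hA))
  have hΓ𝒜 {A : Finset X} (hA : A ∈ 𝒜) : A ∈ Γ := (h𝒜.1.1 hA).1
  by_cases hx : ∃ A ∈ 𝒜, x ∈ A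
  · obtain ⟨A, hA, hxA⟩ := hx
    refine Or.inr ⟨⟨fun B hB => ⟨?_, (h𝒜.1.1 hB).2⟩, h𝒜.1.2⟩,
      hΓ (insert_subset hxA (empty_subset _)) (hΓ𝒜 hA)⟩
    rcases h𝒜.1.2.total hA hB with h | h
    · rw [Set.mem_ofPred_eq, insert_eq_of_mem (h hxA)]
      exact hΓ𝒜 hB
    · exact hΓ (insert_subset hxA h) (hΓ𝒜 hA)
  · push Not at hx
    exact Or.inl ⟨⟨fun A hA => ⟨⟨hΓ𝒜 hA, hx A hA⟩, (h𝒜.1.1 hA).2⟩, h𝒜.1.2⟩,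
      h𝒜.2, notMem_empty x⟩

variable [Fintype X]

theorem acyclic_subdivision_star (Γ : Set (Finset X)) (x : X) :
    Acyclic (subdivision {A | insert x A ∈ Γ}) := by
  by_cases h : {x} ∈ Γ
  · rw [subdivision_of_empty_mem (by simpa using h)]
    refine acyclic_orderComplex_of_sup_mem (x := {x}) ⟨by simpa using h, by simp⟩ ?_
    rintro A ⟨hA, -⟩
    rw [sup_eq_union, union_comm, ← insert_eq]
    exact ⟨by simpa using hA, by simp⟩
  · rw [subdivision_of_empty_notMem (by simpa using h)]
    exact acyclic_empty

theorem acyclic_subdivision_of_deletion_link {Γ : Set (Finset X)} (hΓ : IsLowerSet Γ) (x : X)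
    (hdel : Acyclic (subdivision {A ∈ Γ | x ∉ A}))
    (hlink : Acyclic (subdivision {A | insert x A ∈ Γ ∧ x ∉ A})) : Acyclic (subdivision Γ) := by
  rw [subdivision_eq_deletion_union_star hΓ x]
  refine Acyclic.union (isLowerSet_subdivision _) (isLowerSet_subdivision _) hdel
    (acyclic_subdivision_star Γ x) ?_
  rw [← subdivision_inter]
  convert hlink using 2
  ext A
  exact ⟨fun h => ⟨h.2, h.1.2⟩, fun h => ⟨⟨hΓ (subset_insert x A) h.1, h.2⟩, h.1⟩⟩

/-- A query at `x` splits the complex into the deletion and the link of `x`. The tree decides the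
complex `Γ` on the vertex set `Y`; the vertices in `Z` are those already found to be present. -/
theorem acyclic_subdivision_of_depth_lt {X : Type} [Fintype X] [DecidableEq X]
    (T : DecisionTree X) {Γ : Set (Finset X)} (hΓ : IsLowerSet Γ) {Y Z : Finset X}
    (hΓY : ∀ A ∈ Γ, A ⊆ Y) (hYZ : Disjoint Y Z)
    (hT : ∀ A ⊆ Y, T.eval (fun x => decide (x ∈ A ∪ Z)) = true ↔ A ∈ Γ)
    (hdepth : T.depth < #Y) : Acyclic (subdivision Γ) := by
  induction T generalizing Γ Y Z with
  | leaf b =>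
    cases b with
    | false =>
      rw [subdivision_of_empty_notMem fun h => Bool.false_ne_true ((hT ∅ (empty_subset Y)).2 h)]
      exact acyclic_empty
    | true =>
      have hYΓ : Y ∈ Γ \ {∅} := ⟨(hT Y Subset.rfl).1 rfl, (card_pos.1 (by omega)).ne_empty⟩
      exact acyclic_of_forall_insert_mem Y fun 𝒜 h𝒜 =>
        ⟨insert_mem_orderComplex h𝒜.1 hYΓ fun A hA => Or.inl (hΓY A (h𝒜.1.1 hA).1), h𝒜.2⟩
  | node x t f iht ihf =>
    have hdepth' : max t.depth f.depth + 1 < #Y := hdepth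
    have heval (A : Finset X) : (DecisionTree.node x t f).eval (fun y => decide (y ∈ A)) =
        if x ∈ A then t.eval (fun y => decide (y ∈ A)) else f.eval fun y => decide (y ∈ A) := by
      simp [DecisionTree.eval]
    by_cases hxY : x ∈ Y
    · have hxZ : x ∉ Z := disjoint_left.1 hYZ hxY
      have hcard := card_erase_of_mem hxY
      have hYZ' := hYZ.mono_left (erase_subset x Y)
      refine acyclic_subdivision_of_deletion_link hΓ x
        (ihf (fun A B hBA hA => ⟨hΓ hBA hA.1, fun hx => hA.2 (hBA hx)⟩)
          (fun A hA => subset_erase.2 ⟨hΓY A hA.1, hA.2⟩) hYZ' (fun A hA => ?_) (by omega))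
        (iht (fun A B hBA hA => ⟨hΓ (insert_subset_insert x hBA) hA.1, fun hx => hA.2 (hBA hx)⟩)
          (fun A hA => subset_erase.2 ⟨(subset_insert x A).trans (hΓY _ hA.1), hA.2⟩)
          (disjoint_insert_right.2 ⟨notMem_erase x Y, hYZ'⟩) (fun A hA => ?_) (by omega))
      · obtain ⟨hAY, hxA⟩ := subset_erase.1 hA
        have h := hT A hAY
        rw [heval, if_neg (by simp [hxA, hxZ])] at h
        exact h.trans (and_iff_left hxA).symm
      · obtain ⟨hAY, hxA⟩ := subset_erase.1 hA
        have h := hT (insert x A) (insert_subset hxY hAY)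
        rw [heval, if_pos (by simp), insert_union, ← union_insert] at h
        exact h.trans (and_iff_left hxA).symm
    · by_cases hxZ : x ∈ Z
      · refine iht hΓ hΓY hYZ (fun A hA => ?_) (by omega)
        rw [← hT A hA, heval, if_pos (mem_union_right A hxZ)]
      · refine ihf hΓ hΓY hYZ (fun A hA => ?_) (by omega)
        rw [← hT A hA, heval, if_neg (by simp [hxZ, mt (@hA x) hxY])]

end Subdivision

section Invariant

variable {X G : Type*} [DecidableEq X] [Group G] [MulAction G X]

theorem smul_mem_subdivision {Γ : Set (Finset X)} {g : G} (hg : ∀ A ∈ Γ, g • A ∈ Γ)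
    {𝒜 : Finset (Finset X)} (h𝒜 : 𝒜 ∈ subdivision Γ) : g • 𝒜 ∈ subdivision Γ := by
  refine ⟨⟨fun B hB => ?_, ?_⟩, h𝒜.2⟩
  · obtain ⟨A, hA, rfl⟩ := mem_smul_finset.1 (mem_coe.1 hB)
    exact ⟨hg A (h𝒜.1.1 hA).1, mt smul_finset_eq_empty.1 (h𝒜.1.1 hA).2⟩
  · rw [coe_smul_finset]
    exact h𝒜.1.2.image_of_map_rel _ _ _ fun _ _ h => smul_finset_subset_smul_finset h

theorem smul_mem_subdivision_iff {Γ : Set (Finset X)} {g : G} (hg : ∀ A, g • A ∈ Γ ↔ A ∈ Γ)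
    (𝒜 : Finset (Finset X)) : g • 𝒜 ∈ subdivision Γ ↔ 𝒜 ∈ subdivision Γ := by
  refine ⟨fun h => ?_, smul_mem_subdivision fun A => (hg A).2⟩
  rw [← inv_smul_smul g 𝒜]
  refine smul_mem_subdivision (fun A hA => (hg _).1 ?_) h
  rwa [smul_inv_smul]

theorem smul_eq_self_of_isChain {𝒜 : Finset (Finset X)} {g : G}
    (h𝒜 : IsChain (· ≤ ·) (𝒜 : Set (Finset X))) (hg : g • 𝒜 = 𝒜) {A : Finset X} (hA : A ∈ 𝒜) :
    g • A = A := by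
  have hgA : g • A ∈ 𝒜 := hg ▸ smul_mem_smul_finset hA
  rcases h𝒜.total hgA hA with h | h
  · exact eq_of_subset_of_card_le h (card_smul_finset g A).ge
  · exact (eq_of_subset_of_card_le h (card_smul_finset g A).le).symm

theorem smul_eq_self_of_forall_mem {𝒜 : Finset (Finset X)} {g : G} (h : ∀ A ∈ 𝒜, g • A = A) :
    g • 𝒜 = 𝒜 :=
  (image_congr h).trans image_id

theorem fixed_subdivision (Γ : Set (Finset X)) (S : Set G) :
    {𝒜 ∈ subdivision Γ | ∀ g ∈ S, g • 𝒜 = 𝒜} = subdivision {A ∈ Γ | ∀ g ∈ S, g • A = A} := by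
  refine Set.ext fun 𝒜 => ⟨fun ⟨⟨⟨hΓ, hc⟩, h0⟩, hS⟩ => ?_, fun ⟨⟨hΓ, hc⟩, h0⟩ => ?_⟩
  · exact ⟨⟨fun A hA => ⟨⟨(hΓ hA).1, fun g hg => smul_eq_self_of_isChain hc (hS g hg) hA⟩,
      (hΓ hA).2⟩, hc⟩, h0, fun g _ => smul_finset_empty g⟩
  · exact ⟨⟨⟨fun A hA => ⟨(hΓ hA).1.1, (hΓ hA).2⟩, hc⟩, h0.1⟩,
      fun g hg => smul_eq_self_of_forall_mem fun A hA => (hΓ hA).1.2 g hg⟩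

theorem fixed_subdivision_singleton (Γ : Set (Finset X)) (g : G) :
    {𝒜 ∈ subdivision Γ | g • 𝒜 = 𝒜} = subdivision {A ∈ Γ | g • A = A} := by
  simpa only [Set.mem_singleton_iff, forall_eq] using fixed_subdivision Γ {g}

theorem even_ncard_subdivision_iff [Finite X] {J : Set (Finset X)} (h0 : ∅ ∈ J)
    (hJ : ∀ A ∈ J, ∀ B ∈ J, A \ B ∈ J) : Even (subdivision J).ncard ↔ Even J.ncard := by
  rw [subdivision_of_empty_mem h0, ← bot_eq_empty, even_ncard_orderComplex_iff fun A hA =>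
    even_ncard_lt_of_sdiff_mem hJ hA.1, bot_eq_empty, ← Set.ncard_sdiff_singleton_add_one h0,
    Nat.even_add_one, Nat.not_even_iff_odd]

theorem Acyclic.fixed_subdivision_of_isPGroup [Fintype X]
    {Γ : Set (Finset X)} (hac : Acyclic (subdivision Γ)) {P : Subgroup G} [Finite P]
    (hP : IsPGroup 2 P) (hPΓ : ∀ g ∈ P, ∀ A, g • A ∈ Γ ↔ A ∈ Γ) :
    Acyclic (subdivision {A ∈ Γ | ∀ g ∈ P, g • A = A}) := by
  have := hac.fixed_of_isPGroup (isLowerSet_subdivision Γ) hP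
    (fun g => smul_mem_subdivision_iff (hPΓ g g.2))
    (fun g => fixed_subdivision_singleton Γ (g : G) ▸ isLowerSet_subdivision _)
  have h := fixed_subdivision Γ (P : Set G)
  simp only [SetLike.mem_coe] at h
  simpa only [← h, Subgroup.smul_def, Subtype.forall] using this

theorem Acyclic.even_ncard_subdivision_fixed [Fintype X] {Γ : Set (Finset X)}
    (hac : Acyclic (subdivision Γ)) {g : G} (hg : ∀ A, g • A ∈ Γ ↔ A ∈ Γ) :
    Even (subdivision {A ∈ Γ | g • A = A}).ncard := by
  rw [← fixed_subdivision_singleton]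
  exact hac.even_ncard_fixed (isLowerSet_subdivision Γ) (smul_mem_subdivision_iff hg)

end Invariant

/-- The topological method of Kahn, Saks and Sturtevant, for a `2`-group extended by a cyclic
group. -/
theorem even_ncard_invariant_of_depth_lt {X : Type} {G : Type*} [Fintype X] [DecidableEq X]
    [Group G] [MulAction G X] {Γ : Set (Finset X)} (hΓ : IsLowerSet Γ)
    (hGΓ : ∀ (g : G) A, g • A ∈ Γ ↔ A ∈ Γ) {T : DecisionTree X}
    (hT : ∀ A, T.eval (fun x => decide (x ∈ A)) = true ↔ A ∈ Γ)
    (hdepth : T.depth < Fintype.card X) {P : Subgroup G} [Finite P] (hP : IsPGroup 2 P)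
    {g : G} (hg : g ∈ Subgroup.normalizer (P : Set G)) :
    Even {A ∈ Γ | (∀ σ ∈ P, σ • A = A) ∧ g • A = A}.ncard := by
  by_cases h0 : ∅ ∈ Γ
  swap
  · have : {A ∈ Γ | (∀ σ ∈ P, σ • A = A) ∧ g • A = A} = ∅ :=
      Set.eq_empty_of_forall_notMem fun A hA => h0 (hΓ (empty_subset A) hA.1)
    rw [this, Set.ncard_empty]
    exact Even.zero
  have hac : Acyclic (subdivision Γ) :=
    acyclic_subdivision_of_depth_lt T hΓ (fun A _ => subset_univ A) (disjoint_empty_right univ)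
      (fun A _ => by rw [union_empty, hT]) hdepth
  have hgfix (A : Finset X) : g • A ∈ {A ∈ Γ | ∀ σ ∈ P, σ • A = A} ↔
      A ∈ {A ∈ Γ | ∀ σ ∈ P, σ • A = A} :=
    and_congr (hGΓ g A) (forall_smul_smul_eq_iff_of_mem_normalizer hg A)
  have hacP : Acyclic (subdivision {A ∈ Γ | ∀ σ ∈ P, σ • A = A}) :=
    hac.fixed_subdivision_of_isPGroup hP fun σ _ => hGΓ σ
  have hlef := hacP.even_ncard_subdivision_fixed hgfix
  simp only [Set.mem_ofPred_eq, and_assoc] at hlef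
  rwa [even_ncard_subdivision_iff] at hlef
  · exact ⟨h0, fun σ _ => smul_finset_empty σ, smul_finset_empty g⟩
  · rintro A ⟨hA, hPA, hgA⟩ B ⟨-, hPB, hgB⟩
    refine ⟨hΓ sdiff_subset hA, fun σ hσ => ?_, ?_⟩
    · rw [smul_finset_sdiff, hPA σ hσ, hPB σ hσ]
    · rw [smul_finset_sdiff, hgA, hgB]

end ModTwoChain

/-- `MapsToBlowUp H G k` says that `H` has a homomorphism to the graph obtained from `G` by
replacing each vertex `r` with a clique on `k r` vertices; such a homomorphism is encoded by its
projection `f` to `G` and the position `c v` of the image of `v` inside the clique at `f v`. -/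
def MapsToBlowUp {V R : Type*} (H : SimpleGraph V) (G : SimpleGraph R) (k : R → ℕ) : Prop :=
  ∃ (f : V → R) (c : V → ℕ), (∀ v, c v < k (f v)) ∧
    ∀ u v, H.Adj u v → G.Adj (f u) (f v) ∨ f u = f v ∧ c u ≠ c v

/-- The graph obtained from `F` by splitting the vertex `none` into two twins `none` and
`some none`, which are adjacent exactly when `b` holds. -/
def twinGraph {R : Type*} (b : Prop) (F : SimpleGraph (Option R)) :
    SimpleGraph (Option (Option R)) where
  Adj p q := F.Adj p.join q.join ∨ b ∧ p ≠ q ∧ p.join = q.join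
  symm := ⟨fun _ _ => Or.imp (·.symm) fun h => ⟨h.1, h.2.1.symm, h.2.2.symm⟩⟩
  loopless := ⟨fun _ h => h.elim F.irrefl fun h => h.2.1 rfl⟩

section TwinGraph

variable {R : Type*}

theorem twinGraph_injective (b : Prop) : Function.Injective (twinGraph (R := R) b) := by
  refine Function.LeftInverse.injective (g := SimpleGraph.comap some) fun F => ?_
  ext p q
  simp +contextual [twinGraph]

theorem twinGraph_adj_none_some_none {b : Prop} {F : SimpleGraph (Option R)} :
    (twinGraph b F).Adj none (some none) ↔ b := by
  simp [twinGraph]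

theorem comap_swap_twinGraph [DecidableEq R] (b : Prop) (F : SimpleGraph (Option R)) :
    (twinGraph b F).comap (Equiv.swap none (some none)) = twinGraph b F := by
  have hjoin (p : Option (Option R)) : (Equiv.swap none (some none) p).join = p.join := by
    rcases p with _ | _ | p <;> simp [Equiv.swap_apply_of_ne_of_ne]
  ext p q
  simp [twinGraph, hjoin]

theorem eq_twinGraph_of_comap_swap_eq [DecidableEq R] {G : SimpleGraph (Option (Option R))}
    (hG : G.comap (Equiv.swap none (some none)) = G) :
    twinGraph (G.Adj none (some none)) (G.comap some) = G := by
  have hnone (r : R) : G.Adj none (some (some r)) ↔ G.Adj (some none) (some (some r)) := by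
    conv_lhs => rw [← hG, SimpleGraph.comap_adj, Equiv.swap_apply_left,
      Equiv.swap_apply_of_ne_of_ne (by simp) (by simp)]
  ext p q
  rcases p with _ | _ | p <;> rcases q with _ | _ | q <;>
    simp [twinGraph, hnone, G.adj_comm (some _) none, G.adj_comm (some (some _)) (some none)]

theorem natCast_ncard_eq_add_twinGraph [Finite R] [DecidableEq R]
    {S : Set (SimpleGraph (Option (Option R)))}
    (hS : ∀ G ∈ S, G.comap (Equiv.swap none (some none)) ∈ S) :
    (S.ncard : ZMod 2) = {F | twinGraph False F ∈ S}.ncard + {F | twinGraph True F ∈ S}.ncard := by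
  let I : Set (SimpleGraph (Option (Option R))) := {G | G.comap (Equiv.swap none (some none)) = G}
  have hmoved : Even (S \ I).ncard := by
    have hinv (G : SimpleGraph (Option (Option R))) :
        (G.comap (Equiv.swap none (some none))).comap (Equiv.swap none (some none)) = G := by
      ext
      simp
    exact even_ncard_of_involution (SimpleGraph.comap (Equiv.swap none (some none)))
      (fun G hG => ⟨hS G hG.1, fun h => hG.2 (((hinv G).symm.trans h).symm :)⟩)
      (fun G _ => hinv G) fun G hG => hG.2
  have hfixed : S ∩ I = twinGraph False '' {F | twinGraph False F ∈ S} ∪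
      twinGraph True '' {F | twinGraph True F ∈ S} := by
    ext G
    constructor
    · rintro ⟨hGS, hGI⟩
      obtain ⟨b, F, rfl⟩ : ∃ b F, twinGraph b F = G := ⟨_, _, eq_twinGraph_of_comap_swap_eq hGI⟩
      by_cases hb : b <;> simp only [hb] at hGS ⊢
      exacts [Or.inr ⟨F, hGS, rfl⟩, Or.inl ⟨F, hGS, rfl⟩]
    · rintro (⟨F, hF, rfl⟩ | ⟨F, hF, rfl⟩) <;> exact ⟨hF, comap_swap_twinGraph _ F⟩
  have hdisj : Disjoint (twinGraph False '' {F | twinGraph False F ∈ S})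
      (twinGraph True '' {F | twinGraph True F ∈ S}) := by
    refine Set.disjoint_left.2 ?_
    rintro _ ⟨F, -, rfl⟩ ⟨F', -, hF⟩
    exact twinGraph_adj_none_some_none.1 (hF ▸ twinGraph_adj_none_some_none.2 trivial)
  rw [← Set.ncard_inter_add_ncard_sdiff_eq_ncard S I, Nat.cast_add,
    (ZMod.natCast_eq_zero_iff_even).2 hmoved, add_zero, hfixed, Set.ncard_union_eq hdisj,
    Set.ncard_image_of_injective _ (twinGraph_injective _),
    Set.ncard_image_of_injective _ (twinGraph_injective _), Nat.cast_add]

theorem mapsToBlowUp_twinGraph_false {V : Type*} {H : SimpleGraph V} {F : SimpleGraph (Option R)}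
    {k : Option R → ℕ} :
    MapsToBlowUp H (twinGraph False F) (k ∘ Option.join) ↔ MapsToBlowUp H F k := by
  constructor
  · rintro ⟨f, c, hc, h⟩
    refine ⟨Option.join ∘ f, c, hc, fun u v huv => ?_⟩
    exact (h u v huv).imp (·.resolve_right And.left) (And.imp_left (congrArg Option.join))
  · rintro ⟨f, c, hc, h⟩
    exact ⟨some ∘ f, c, hc, fun u v huv => (h u v huv).imp Or.inl (And.imp_left (congrArg some))⟩

theorem mapsToBlowUp_twinGraph_true [DecidableEq R] {V : Type*} {H : SimpleGraph V}
    {F : SimpleGraph (Option R)} {k : Option R → ℕ} :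
    MapsToBlowUp H (twinGraph True F) (k ∘ Option.join) ↔
      MapsToBlowUp H F (Function.update k none (2 * k none)) := by
  constructor
  · rintro ⟨f, c, hc, h⟩
    refine ⟨Option.join ∘ f, fun v => if f v = some none then c v + k none else c v,
      fun v => ?_, fun u v huv => ?_⟩
    · have := hc v
      rcases hv : f v with _ | _ | r <;> grind
    · have hu := hc u
      have hv := hc v
      have := h u v huv
      simp only [twinGraph, Function.comp_apply, true_and] at this hu hv ⊢
      rcases hfu : f u with _ | _ | r <;> rcases hfv : f v with _ | _ | r' <;> grind
  · rintro ⟨f, c, hc, h⟩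
    have hjoin (v : V) : (if f v = none ∧ c v < k none then none else some (f v)).join = f v := by
      grind
    refine ⟨fun v => if f v = none ∧ c v < k none then none else some (f v),
      fun v => if f v = none ∧ ¬ c v < k none then c v - k none else c v,
      fun v => ?_, fun u v huv => ?_⟩
    · have := hc v
      rw [Function.comp_apply, hjoin]
      grind
    · simp only [twinGraph, hjoin]
      have := h u v huv
      grind

end TwinGraph

/-- The number, modulo `2`, of graphs on `R` whose blow-up with clique sizes `k` receives no
homomorphism from `H`. -/
noncomputable def blowUpParity {V R : Type*} (H : SimpleGraph V) (k : R → ℕ) : ZMod 2 :=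
  {G : SimpleGraph R | ¬ MapsToBlowUp H G k}.ncard

section BlowUpParity

variable {V R R' : Type*} {H : SimpleGraph V}

theorem mapsToBlowUp_comap_iff (σ : R ≃ R') {G : SimpleGraph R'} {k : R' → ℕ} :
    MapsToBlowUp H (G.comap σ) (k ∘ σ) ↔ MapsToBlowUp H G k := by
  constructor
  · rintro ⟨f, c, hc, h⟩
    exact ⟨σ ∘ f, c, hc, fun u v huv => (h u v huv).imp_right (And.imp_left (congrArg σ))⟩
  · rintro ⟨f, c, hc, h⟩
    exact ⟨σ.symm ∘ f, c, by simpa using hc, by simpa using h⟩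

theorem comap_equiv_bijective (σ : R ≃ R') :
    Function.Bijective (SimpleGraph.comap σ : SimpleGraph R' → SimpleGraph R) := by
  refine Function.bijective_iff_has_inverse.2
    ⟨SimpleGraph.comap σ.symm, fun G => ?_, fun G => ?_⟩ <;> ext <;> simp

theorem blowUpParity_comp_equiv (σ : R ≃ R') (k : R' → ℕ) :
    blowUpParity H (k ∘ σ) = blowUpParity H k := by
  have hσ := comap_equiv_bijective σ
  rw [blowUpParity, blowUpParity, ← Set.ncard_preimage_of_injective_subset_range hσ.1
    (by simp [hσ.2.range_eq])]
  simp only [Set.preimage_ofPred_eq, mapsToBlowUp_comap_iff]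

theorem blowUpParity_comp_join [Finite R] [DecidableEq R] (k : Option R → ℕ) :
    blowUpParity H (k ∘ Option.join) =
      blowUpParity H k + blowUpParity H (Function.update k none (2 * k none)) := by
  have hk : (k ∘ Option.join) ∘ Equiv.swap none (some none) = k ∘ Option.join := by
    funext p
    rcases p with _ | _ | p <;> simp [Equiv.swap_apply_of_ne_of_ne]
  have hswap : ∀ G ∈ {G | ¬ MapsToBlowUp H G (k ∘ Option.join)},
      G.comap (Equiv.swap none (some none)) ∈ {G | ¬ MapsToBlowUp H G (k ∘ Option.join)} := by
    intro G hG
    rwa [Set.mem_ofPred_eq, ← hk, mapsToBlowUp_comap_iff]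
  rw [blowUpParity, natCast_ncard_eq_add_twinGraph hswap]
  simp only [Set.mem_ofPred_eq, mapsToBlowUp_twinGraph_false, mapsToBlowUp_twinGraph_true,
    blowUpParity]

theorem mapsToBlowUp_of_card_le [Fintype V] {G : SimpleGraph R} {k : R → ℕ} {r : R}
    (hr : Fintype.card V ≤ k r) : MapsToBlowUp H G k :=
  ⟨fun _ => r, fun v => Fintype.equivFin V v, fun v => (Fintype.equivFin V v).2.trans_le hr,
    fun _ _ huv => Or.inr ⟨rfl, fun h => huv.ne ((Fintype.equivFin V).injective (Fin.ext h))⟩⟩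

theorem blowUpParity_eq_zero_of_card_le [Fintype V] {k : R → ℕ} {r : R}
    (hr : Fintype.card V ≤ k r) : blowUpParity H k = 0 := by
  simp [blowUpParity, mapsToBlowUp_of_card_le hr]

theorem mapsToBlowUp_one_iff {G : SimpleGraph R} :
    MapsToBlowUp H G (fun _ => 1) ↔ Nonempty (H →g G) := by
  constructor
  · rintro ⟨f, c, hc, h⟩
    refine ⟨f, fun {u v} huv => (h u v huv).resolve_right fun huv' => huv'.2 ?_⟩
    rw [Nat.lt_one_iff.1 (hc u), Nat.lt_one_iff.1 (hc v)]
  · rintro ⟨φ⟩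
    exact ⟨φ, 0, fun _ => one_pos, fun u v huv => Or.inl (φ.map_adj huv)⟩

theorem blowUpParity_one_eq :
    blowUpParity H (fun _ : R => 1) = {G : SimpleGraph R | IsEmpty (H →g G)}.ncard := by
  simp only [blowUpParity, mapsToBlowUp_one_iff, not_nonempty_iff]

theorem blowUpParity_one_of_unique [Unique R] (hH : H.edgeSet.Nonempty) :
    blowUpParity H (fun _ : R => 1) = 1 := by
  obtain ⟨⟨u, v⟩, huv⟩ := hH
  have (G : SimpleGraph R) : IsEmpty (H →g G) :=
    ⟨fun φ => (φ.map_adj huv).ne (Subsingleton.elim _ _)⟩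
  simp [blowUpParity_one_eq, this, Set.ncard_univ]

end BlowUpParity

section Multiset

/-- `blowUpParity` for a vertex set carrying the multiset `s` of clique sizes. -/
noncomputable def multisetParity {V : Type*} (H : SimpleGraph V) (s : Multiset ℕ) : ZMod 2 :=
  blowUpParity H fun x : s => (x : ℕ)

variable {V : Type*} {H : SimpleGraph V}

theorem multisetParity_cons (k : ℕ) (s : Multiset ℕ) :
    multisetParity H (k ::ₘ s) =
      blowUpParity H fun x : Option s => x.elim k fun y => (y : ℕ) := by
  rw [multisetParity, ← blowUpParity_comp_equiv Multiset.consEquiv.symm]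
  congr 1
  funext x
  cases x <;> simp

theorem multisetParity_cons_cons (k : ℕ) (s : Multiset ℕ) :
    multisetParity H (k ::ₘ k ::ₘ s) =
      multisetParity H (k ::ₘ s) + multisetParity H (2 * k ::ₘ s) := by
  classical
  let weight (k : ℕ) (x : Option s) : ℕ := x.elim k fun y => (y : ℕ)
  have hjoin : (fun x : Option (k ::ₘ s) => x.elim k fun y => (y : ℕ)) ∘
      Equiv.optionCongr Multiset.consEquiv.symm = weight k ∘ Option.join := by
    funext x
    rcases x with _ | _ | x <;> rfl
  have hupdate : Function.update (weight k) none (2 * weight k none) = weight (2 * k) := by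
    funext x
    cases x <;> simp [weight]
  rw [multisetParity_cons, ← blowUpParity_comp_equiv (Equiv.optionCongr Multiset.consEquiv.symm),
    hjoin, blowUpParity_comp_join, hupdate, multisetParity_cons, multisetParity_cons]

theorem multisetParity_card_nsmul {B : Type*} [Fintype B] (k : ℕ) :
    multisetParity H (Fintype.card B • {k}) = blowUpParity H fun _ : B => k := by
  have hcard : Fintype.card (Fintype.card B • {k} : Multiset ℕ) = Fintype.card B := by
    simp
  have hval (x : (Fintype.card B • {k} : Multiset ℕ)) : (x : ℕ) = k :=
    Multiset.mem_singleton.1 (Multiset.mem_of_mem_nsmul (Multiset.coe_mem (x := x)))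
  rw [multisetParity, ← blowUpParity_comp_equiv (Fintype.equivOfCardEq hcard)]
  simp only [hval, Function.comp_def]

theorem map_two_pow_nsmul_add {M A : Type*} [AddCommMonoid M] [Semiring A] [CharP A 2]
    {Φ : M → A} {x y z : M} (h : ∀ s, Φ (x + s) = Φ (y + s) + Φ (z + s)) (n : ℕ) (s : M) :
    Φ (2 ^ n • x + s) = Φ (2 ^ n • y + s) + Φ (2 ^ n • z + s) := by
  induction n generalizing s with
  | zero => simpa using h s
  | succ n ih =>
    have hsucc (w : M) : 2 ^ (n + 1) • w + s = 2 ^ n • w + (2 ^ n • w + s) := by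
      rw [pow_succ, mul_two, add_nsmul, add_assoc]
    calc Φ (2 ^ (n + 1) • x + s)
        = Φ (2 ^ n • x + (2 ^ n • y + s)) + Φ (2 ^ n • x + (2 ^ n • z + s)) := by
          rw [hsucc, ih, add_left_comm, add_left_comm (2 ^ n • z)]
      _ = Φ (2 ^ n • y + (2 ^ n • y + s)) + Φ (2 ^ n • z + (2 ^ n • y + s)) +
            (Φ (2 ^ n • z + (2 ^ n • y + s)) + Φ (2 ^ n • z + (2 ^ n • z + s))) := by
          rw [ih, ih, add_left_comm (2 ^ n • y) (2 ^ n • z)]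
      _ = Φ (2 ^ (n + 1) • y + s) + Φ (2 ^ (n + 1) • z + s) := by
          rw [add_assoc, CharTwo.add_cancel_left, hsucc, hsucc]

theorem multisetParity_nsmul_singleton_add (t k : ℕ) (s : Multiset ℕ) :
    multisetParity H (2 ^ 2 ^ t • {k} + s) =
      multisetParity H ({k} + s) + multisetParity H ({2 ^ 2 ^ t * k} + s) := by
  induction t generalizing k s with
  | zero => simpa [two_nsmul, add_assoc] using multisetParity_cons_cons k s
  | succ t ih =>
    have hsq : 2 ^ 2 ^ (t + 1) = 2 ^ 2 ^ t * 2 ^ 2 ^ t := by rw [pow_succ, mul_two, pow_add]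
    rw [hsq, mul_nsmul, map_two_pow_nsmul_add (ih k), ih, ih, ← mul_assoc, add_assoc,
      ← add_assoc (multisetParity H ({2 ^ 2 ^ t * k} + s)), CharTwo.add_self_eq_zero, zero_add]

theorem multisetParity_nsmul_one [Fintype V] (hH : H.edgeSet.Nonempty) {t : ℕ}
    (ht : Fintype.card V ≤ 2 ^ 2 ^ t) (q : ℕ) :
    multisetParity H (((2 ^ 2 ^ t - 1) * q + 1) • {1}) = 1 := by
  have hlarge (s : Multiset ℕ) : multisetParity H ({2 ^ 2 ^ t} + s) = 0 := by
    rw [Multiset.singleton_add, multisetParity_cons]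
    exact blowUpParity_eq_zero_of_card_le (r := none) ht
  induction q with
  | zero =>
    rw [mul_zero, zero_add, ← Fintype.card_unit, multisetParity_card_nsmul]
    exact blowUpParity_one_of_unique hH
  | succ q ih =>
    have hcard : (2 ^ 2 ^ t - 1) * (q + 1) + 1 = 2 ^ 2 ^ t + (2 ^ 2 ^ t - 1) * q := by
      have := Nat.one_le_two_pow (n := 2 ^ t)
      rw [mul_add_one]
      omega
    rw [hcard, add_nsmul, multisetParity_nsmul_singleton_add, mul_one, hlarge, add_zero,
      add_comm, ← succ_nsmul, ih]

theorem odd_ncard_isEmpty_hom [Fintype V] (hH : H.edgeSet.Nonempty) {t : ℕ}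
    (ht : Fintype.card V ≤ 2 ^ 2 ^ t) (q : ℕ) {B : Type*} [Fintype B]
    (hB : Fintype.card B = (2 ^ 2 ^ t - 1) * q + 1) :
    Odd {G : SimpleGraph B | IsEmpty (H →g G)}.ncard := by
  rw [← ZMod.natCast_eq_one_iff_odd, ← blowUpParity_one_eq, ← multisetParity_card_nsmul, hB,
    multisetParity_nsmul_one hH ht]

end Multiset

section DifferenceClique

open Finset

variable {F : Type*} [Field F] [Fintype F]

section Incidence

variable [DecidableEq F] (U A : Finset F)

theorem sum_card_mul_sub_mem :
    ∑ p : F × F, #{a ∈ A | a * p.1 - p.2 ∈ U} = Fintype.card F * (#A * #U) := by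
  have hcount (a w : F) : #{y | a * w - y ∈ U} = #U :=
    card_equiv (Equiv.subLeft (a * w)) (by simp)
  rw [Fintype.sum_prod_type]
  simp_rw [card_filter, sum_comm (s := univ) (t := A), ← card_filter, hcount, sum_const,
    smul_eq_mul, card_univ]
  ring

theorem card_mul_sub_mem_and_mul_sub_mem {a b : F} (hab : a ≠ b) :
    #{p : F × F | a * p.1 - p.2 ∈ U ∧ b * p.1 - p.2 ∈ U} = #U ^ 2 := by
  have hab' : a - b ≠ 0 := sub_ne_zero.2 hab
  rw [sq, ← card_product]
  refine card_bij' (fun p _ => (a * p.1 - p.2, b * p.1 - p.2))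
    (fun z _ => ((z.1 - z.2) / (a - b), a * ((z.1 - z.2) / (a - b)) - z.1)) ?_ ?_ ?_ ?_
  · simp
  · rintro ⟨u, v⟩ huv
    have : b * ((u - v) / (a - b)) - (a * ((u - v) / (a - b)) - u) = v := by
      field_simp
      ring
    simp_all
  · rintro ⟨w, y⟩ -
    ext <;> field_simp <;> ring
  · rintro ⟨u, v⟩ -
    ext <;> field_simp <;> ring

theorem sum_sq_card_mul_sub_mem_le :
    ∑ p : F × F, #{a ∈ A | a * p.1 - p.2 ∈ U} ^ 2 ≤
      Fintype.card F * (#A * #U) + (#A * #U) ^ 2 := by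
  have hpair (a b : F) : #{p : F × F | a * p.1 - p.2 ∈ U ∧ b * p.1 - p.2 ∈ U} ≤
      (if a = b then Fintype.card F * #U else 0) + #U ^ 2 := by
    split_ifs with hab
    · have := sum_card_mul_sub_mem U {a}
      simp only [card_filter, sum_singleton, card_singleton, one_mul] at this
      simp only [← hab, and_self, card_filter, this, Nat.le_add_right]
    · rw [card_mul_sub_mem_and_mul_sub_mem U hab, zero_add]
  calc ∑ p : F × F, #{a ∈ A | a * p.1 - p.2 ∈ U} ^ 2
      = ∑ a ∈ A, ∑ b ∈ A, #{p : F × F | a * p.1 - p.2 ∈ U ∧ b * p.1 - p.2 ∈ U} := by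
        simp only [sq, ← card_product, ← filter_product]
        simp only [card_filter, sum_product, sum_comm (s := univ) (t := A)]
    _ ≤ ∑ a ∈ A, ∑ b ∈ A, ((if a = b then Fintype.card F * #U else 0) + #U ^ 2) :=
        sum_le_sum fun a _ => sum_le_sum fun b _ => hpair a b
    _ = Fintype.card F * (#A * #U) + (#A * #U) ^ 2 := by
        simp only [sum_add_distrib, sum_ite_eq, sum_const, smul_eq_mul, sum_ite_mem, inter_self]
        ring

theorem sum_sq_card_mul_sub_mem_sub_le :
    ∑ p : F × F, ((#{a ∈ A | a * p.1 - p.2 ∈ U} : ℝ) - #A * #U / Fintype.card F) ^ 2 ≤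
      #A * #U * Fintype.card F := by
  have hq : (Fintype.card F : ℝ) ≠ 0 := by exact_mod_cast Fintype.card_ne_zero
  have hfirst : ∑ p : F × F, (#{a ∈ A | a * p.1 - p.2 ∈ U} : ℝ) =
      Fintype.card F * (#A * #U) := by exact_mod_cast sum_card_mul_sub_mem U A
  have hsecond : ∑ p : F × F, (#{a ∈ A | a * p.1 - p.2 ∈ U} : ℝ) ^ 2 ≤
      Fintype.card F * (#A * #U) + (#A * #U) ^ 2 := by
    exact_mod_cast sum_sq_card_mul_sub_mem_le U A
  simp only [sub_sq, sum_add_distrib, sum_sub_distrib, ← sum_mul, ← mul_sum, hfirst, sum_const,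
    card_univ, Fintype.card_prod, nsmul_eq_mul, Nat.cast_mul]
  field_simp
  linarith

end Incidence

/-- The elements of the finite field `F` that lie in the subgroup `T` of its units. -/
noncomputable def unitsFinset (T : Subgroup Fˣ) : Finset F :=
  (Set.toFinite (Units.val '' (T : Set Fˣ))).toFinset

section UnitsFinset

variable {T : Subgroup Fˣ}

theorem mem_unitsFinset {z : F} : z ∈ unitsFinset T ↔ ∃ u ∈ T, (u : F) = z := by
  simp [unitsFinset]

theorem card_unitsFinset : #(unitsFinset T) = Nat.card T := by
  rw [unitsFinset, ← Set.ncard_eq_toFinset_card, Set.ncard_image_of_injective _ Units.val_injective]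
  rfl

theorem units_mul_mem_unitsFinset_iff {u : Fˣ} (hu : u ∈ T) {z : F} :
    u * z ∈ unitsFinset T ↔ z ∈ unitsFinset T := by
  simp only [mem_unitsFinset]
  constructor
  · rintro ⟨v, hv, hvz⟩
    exact ⟨u⁻¹ * v, T.mul_mem (T.inv_mem hu) hv, by
      rw [Units.val_mul, hvz, Units.inv_mul_cancel_left]⟩
  · rintro ⟨v, hv, rfl⟩
    exact ⟨u * v, T.mul_mem hu hv, Units.val_mul u v⟩

theorem sum_sq_card_sub_mem_sub_le [DecidableEq F] (T : Subgroup Fˣ) (A : Finset F) :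
    ∑ b ∈ A, ((#{a ∈ A | a - b ∈ unitsFinset T} : ℝ) -
      #A * #(unitsFinset T) / Fintype.card F) ^ 2 ≤ #A * Fintype.card F := by
  set U := unitsFinset T with hU
  have hU0 : (0 : ℝ) < #U := by
    rw [hU, card_unitsFinset]
    exact_mod_cast Nat.card_pos
  have hinj : Set.InjOn (fun p : F × F => (p.1, p.1 * p.2)) (U ×ˢ A : Finset (F × F)) := by
    rintro ⟨w, b⟩ hwb ⟨w', b'⟩ - h
    obtain ⟨u, -, rfl⟩ := mem_unitsFinset.1 (mem_product.1 (mem_coe.1 hwb)).1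
    obtain ⟨rfl, h⟩ := Prod.mk.inj h
    exact Prod.ext rfl (u.mul_right_inj.1 h)
  have hrow {w : F} (hw : w ∈ U) (b : F) :
      #{a ∈ A | a * w - w * b ∈ U} = #{a ∈ A | a - b ∈ U} := by
    obtain ⟨u, hu, rfl⟩ := mem_unitsFinset.1 hw
    simp only [mul_comm _ (u : F), ← mul_sub, hU, units_mul_mem_unitsFinset_iff hu]
  refine le_of_mul_le_mul_left ?_ hU0
  calc (#U : ℝ) * ∑ b ∈ A, ((#{a ∈ A | a - b ∈ U} : ℝ) - #A * #U / Fintype.card F) ^ 2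
      = ∑ p ∈ U ×ˢ A, ((#{a ∈ A | a * p.1 - p.1 * p.2 ∈ U} : ℝ) -
          #A * #U / Fintype.card F) ^ 2 := by
        rw [sum_product, ← nsmul_eq_mul, ← sum_const]
        exact sum_congr rfl fun w hw => sum_congr rfl fun b _ => by rw [hrow hw]
    _ ≤ ∑ p : F × F, ((#{a ∈ A | a * p.1 - p.2 ∈ U} : ℝ) - #A * #U / Fintype.card F) ^ 2 := by
        rw [← sum_image (f := fun p : F × F => ((#{a ∈ A | a * p.1 - p.2 ∈ U} : ℝ) -
          #A * #U / Fintype.card F) ^ 2) hinj]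
        exact sum_le_sum_of_subset_of_nonneg (subset_univ _) fun _ _ _ => sq_nonneg _
    _ ≤ #A * #U * Fintype.card F := sum_sq_card_mul_sub_mem_sub_le U A
    _ = #U * (#A * Fintype.card F) := by ring

theorem exists_le_card_sub_mem [DecidableEq F] {A : Finset F}
    (hA : √(Fintype.card F) ≤ #A * (Nat.card T / (2 * Fintype.card F))) :
    ∃ b ∈ A, (#A : ℝ) * (Nat.card T / (2 * Fintype.card F)) ≤
      #{a ∈ A | a - b ∈ unitsFinset T} := by
  set δ : ℝ := Nat.card T / (2 * Fintype.card F) with hδ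
  have hq : (0 : ℝ) < Fintype.card F := by exact_mod_cast Fintype.card_pos
  have hAne : A.Nonempty := by
    rw [nonempty_iff_ne_empty]
    rintro rfl
    exact (Real.sqrt_pos.2 hq).not_ge (by simpa using hA)
  by_contra! hlt
  have hlarge : ∀ b ∈ A, (Fintype.card F : ℝ) <
      ((#{a ∈ A | a - b ∈ unitsFinset T} : ℝ) - #A * #(unitsFinset T) / Fintype.card F) ^ 2 := by
    intro b hb
    have hmean : (#A : ℝ) * #(unitsFinset T) / Fintype.card F = 2 * (#A * δ) := by
      rw [card_unitsFinset, hδ]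
      field_simp
    rw [hmean, ← Real.sq_sqrt hq.le, sub_sq_comm]
    exact pow_lt_pow_left₀ (by linarith [hlt b hb]) (Real.sqrt_nonneg _) two_ne_zero
  refine (sum_lt_sum_of_nonempty hAne hlarge).not_ge ?_
  rw [sum_const, nsmul_eq_mul]
  exact sum_sq_card_sub_mem_sub_le T A

theorem exists_forall_lt_sub_mem (h : ℕ) (A : Finset F)
    (hA : √(Fintype.card F) ≤ #A * (Nat.card T / (2 * Fintype.card F) : ℝ) ^ h) :
    ∃ x : Fin h → F, (∀ i, x i ∈ A) ∧ ∀ i j, i < j → x j - x i ∈ unitsFinset T := by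
  classical
  induction h generalizing A with
  | zero => exact ⟨Fin.elim0, fun i => i.elim0, fun i => i.elim0⟩
  | succ h ih =>
    have hδ0 : (0 : ℝ) ≤ Nat.card T / (2 * Fintype.card F) := by positivity
    have hδ1 : (Nat.card T / (2 * Fintype.card F) : ℝ) ≤ 1 := by
      have hT : (Nat.card T : ℝ) ≤ Fintype.card F := by
        exact_mod_cast card_unitsFinset (T := T) ▸ card_le_univ (unitsFinset T)
      exact div_le_one_of_le₀ (by linarith [(Fintype.card F).cast_nonneg (α := ℝ)]) (by positivity)
    obtain ⟨b, hb, hcard⟩ := exists_le_card_sub_mem (T := T) (hA.trans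
      (mul_le_mul_of_nonneg_left (pow_le_of_le_one hδ0 hδ1 (Nat.succ_ne_zero h)) (by positivity)))
    obtain ⟨x, hx, hxT⟩ := ih {a ∈ A | a - b ∈ unitsFinset T} (by
      refine hA.trans ?_
      rw [pow_succ', ← mul_assoc]
      exact mul_le_mul_of_nonneg_right hcard (pow_nonneg hδ0 h))
    refine ⟨Fin.cons b x, Fin.cases hb fun i => (mem_filter.1 (hx i)).1, fun i j hij => ?_⟩
    cases j using Fin.cases with
    | zero => exact absurd hij (Fin.not_lt_zero i)
    | succ j =>
      cases i using Fin.cases with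
      | zero => exact (mem_filter.1 (hx j)).2
      | succ i => exact hxT i j (Fin.succ_lt_succ_iff.1 hij)

end UnitsFinset

end DifferenceClique

section NearFermat

/-- The differences of the family `x` lie in `U`, up to sign: its members form a clique in the
Cayley graph generated by `U`. -/
def IsDifferenceClique {ι F : Type*} [Ring F] (U : Subgroup Fˣ) (x : ι → F) : Prop :=
  Pairwise fun i j => ∃ u ∈ U, x i - x j = (u : F) ∨ x j - x i = (u : F)

theorem IsDifferenceClique.injective {ι F : Type*} [Ring F] [Nontrivial F] {U : Subgroup Fˣ}
    {x : ι → F} (hx : IsDifferenceClique U x) : Function.Injective x := by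
  intro i j hij
  by_contra hne
  obtain ⟨u, -, h | h⟩ := hx hne <;> exact u.ne_zero (by rw [← h, hij, sub_self])

theorem IsDifferenceClique.of_lt {ι F : Type*} [LinearOrder ι] [Ring F] {U : Subgroup Fˣ}
    {x : ι → F} (hx : ∀ i j, i < j → ∃ u ∈ U, x j - x i = (u : F)) : IsDifferenceClique U x := by
  intro i j hij
  rcases lt_or_gt_of_ne hij with h | h
  · exact (hx i j h).imp fun u hu => ⟨hu.1, Or.inr hu.2⟩
  · exact (hx j i h).imp fun u hu => ⟨hu.1, Or.inl hu.2⟩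

/-- A prime `p ≡ 1 [MOD 2 ^ a]` for which the Cayley graph of `ℤ/p` generated by some `2`-group of
units contains a clique of size `h`. -/
def IsBlockPrime (h a p : ℕ) : Prop :=
  p.Prime ∧ p ≡ 1 [MOD 2 ^ a] ∧ ∃ U : Subgroup (ZMod p)ˣ, IsPGroup 2 U ∧
    ∃ x : Fin h → ZMod p, IsDifferenceClique U x

theorem NearFermatPrime.exists_eq_two_pow_mul_add_one {n p : ℕ} (hn : n ≠ 0)
    (hp : NearFermatPrime (1 / n) p) : ∃ s m, p = 2 ^ s * m + 1 ∧ m ^ n ≤ p := by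
  obtain ⟨hp, s, hs, hle⟩ := hp
  refine ⟨s, (p - 1) / 2 ^ s, ?_, ?_⟩
  · rw [Nat.mul_div_cancel' hs, Nat.sub_add_cancel hp.one_le]
  · have := pow_le_pow_left₀ (Nat.cast_nonneg _) hle n
    rw [one_div, Real.rpow_inv_natCast_pow p.cast_nonneg hn] at this
    exact_mod_cast this

theorem sqrt_le_mul_two_pow_div_pow {h m p s : ℕ} (hp : p = 2 ^ s * m + 1) (hm : m ≠ 0)
    (hmp : m ^ (4 * h) ≤ p) (hph : 4 ^ (4 * h) ≤ p) :
    √p ≤ p * ((2 ^ s : ℕ) / (2 * p) : ℝ) ^ h := by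
  have hm0 : (0 : ℝ) < m := by exact_mod_cast Nat.pos_of_ne_zero hm
  have hp0 : (0 : ℝ) < p := by rw [hp]; positivity
  have hroot : (4 * m : ℝ) ^ h ≤ √p := by
    refine Real.le_sqrt_of_sq_le (le_of_pow_le_pow_left₀ two_ne_zero hp0.le ?_)
    calc (((4 * m : ℝ) ^ h) ^ 2) ^ 2 = 4 ^ (4 * h) * m ^ (4 * h) := by ring
      _ ≤ p * p := by gcongr <;> assumption_mod_cast
      _ = (p : ℝ) ^ 2 := (sq _).symm
  have hdensity : 1 / (4 * m : ℝ) ≤ (2 ^ s : ℕ) / (2 * p) := by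
    have hpow : 1 ≤ 2 ^ s * m := Nat.mul_pos (by positivity) (Nat.pos_of_ne_zero hm)
    rw [div_le_div_iff₀ (by positivity) (by positivity)]
    exact_mod_cast (by linarith : 1 * (2 * p) ≤ 2 ^ s * (4 * m))
  calc √p = p / √p := Real.div_sqrt.symm
    _ ≤ p / (4 * m) ^ h := by gcongr
    _ = p * (1 / (4 * m)) ^ h := by rw [one_div, inv_pow, div_eq_mul_inv]
    _ ≤ p * ((2 ^ s : ℕ) / (2 * p) : ℝ) ^ h := by gcongr

theorem two_pow_dvd_of_sq_le {a m p s : ℕ} (hp : p = 2 ^ s * m + 1) (hmp : m ^ 2 ≤ p)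
    (hpa : 4 ^ (a + 1) ≤ p) : 2 ^ a ∣ p - 1 := by
  suffices has : a ≤ s by
    rw [hp, Nat.add_sub_cancel]
    exact (pow_dvd_pow 2 has).mul_right m
  by_contra! hsa
  have hsp : 16 * (2 ^ s) ^ 2 ≤ p := by
    calc 16 * (2 ^ s) ^ 2 = 4 ^ (s + 2) := by
          rw [← pow_mul, mul_comm s, pow_mul, pow_add]
          norm_num [mul_comm]
      _ ≤ 4 ^ (a + 1) := Nat.pow_le_pow_right (by norm_num) (by omega)
      _ ≤ p := hpa
  have : 16 * (2 ^ s * m) ^ 2 ≤ p * p := by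
    rw [mul_pow, ← mul_assoc]
    exact Nat.mul_le_mul hsp hmp
  nlinarith [Nat.one_le_two_pow (n := s)]

theorem NearFermatPrime.isBlockPrime {h a p : ℕ} (hh : 0 < h)
    (hp : NearFermatPrime (1 / (4 * h : ℕ)) p) (hph : 4 ^ (4 * h) ≤ p) (hpa : 4 ^ (a + 1) ≤ p) :
    IsBlockPrime h a p := by
  have : Fact p.Prime := ⟨hp.1⟩
  have : Fact (Nat.Prime 2) := ⟨Nat.prime_two⟩
  obtain ⟨s, m, hps, hmp⟩ := hp.exists_eq_two_pow_mul_add_one (by omega)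
  have hm : m ≠ 0 := by
    rintro rfl
    exact hp.1.one_lt.ne' (by simpa using hps)
  have hunits : Nat.card (ZMod p)ˣ = 2 ^ s * m := by
    rw [Nat.card_eq_fintype_card, ZMod.card_units, hps, Nat.add_sub_cancel]
  obtain ⟨U, hUcard⟩ := Sylow.exists_subgroup_card_pow_prime 2 (Dvd.intro m hunits.symm)
  have hdvd : 2 ^ a ∣ p - 1 := two_pow_dvd_of_sq_le hps
    ((Nat.pow_le_pow_right (Nat.pos_of_ne_zero hm) (by omega)).trans hmp) hpa
  obtain ⟨x, -, hx⟩ := exists_forall_lt_sub_mem (T := U) h Finset.univ (by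
    rw [hUcard, Finset.card_univ, ZMod.card]
    exact sqrt_le_mul_two_pow_div_pow hps hm hmp hph)
  refine ⟨hp.1, ((Nat.modEq_iff_dvd' hp.1.one_le).2 hdvd).symm, U, IsPGroup.of_card hUcard, x,
    IsDifferenceClique.of_lt fun i j hij => ?_⟩
  obtain ⟨u, hu, hux⟩ := mem_unitsFinset.1 (hx i j hij)
  exact ⟨u, hu, hux.symm⟩

end NearFermat

namespace DecisionTree

variable {ι κ : Type}

/-- Relabel the queries of a decision tree. -/
def map (f : ι → κ) : DecisionTree ι → DecisionTree κ
  | leaf b => leaf b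
  | node i t s => node (f i) (t.map f) (s.map f)

theorem eval_map (f : ι → κ) (T : DecisionTree ι) (x : κ → Bool) :
    (T.map f).eval x = T.eval (x ∘ f) := by
  induction T with
  | leaf b => rfl
  | node i t s iht ihs => simp only [map, eval, iht, ihs, Function.comp_apply]

theorem depth_map (f : ι → κ) (T : DecisionTree ι) : (T.map f).depth = T.depth := by
  induction T with
  | leaf b => rfl
  | node i t s iht ihs => simp only [map, depth, iht, ihs]

theorem exists_depth_le_card_of_eq_outside (f : (ι → Bool) → Prop) (Y : Finset ι) (z : ι → Bool) :
    ∃ T : DecisionTree ι,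
      (∀ x, (∀ i ∉ Y, x i = z i) → (T.eval x = true ↔ f x)) ∧ T.depth ≤ Y.card := by
  classical
  induction Y using Finset.induction_on generalizing z with
  | empty =>
    refine ⟨leaf (decide (f z)), fun x hx => ?_, le_rfl⟩
    obtain rfl : x = z := funext fun i => hx i (Finset.notMem_empty i)
    simp [eval]
  | insert i Y hi ih =>
    obtain ⟨T, hT, hTd⟩ := ih (Function.update z i true)
    obtain ⟨S, hS, hSd⟩ := ih (Function.update z i false)
    refine ⟨node i T S, fun x hx => ?_, ?_⟩
    · have hxi (j : ι) (hj : j ∉ Y) : x j = Function.update z i (x i) j := by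
        by_cases hji : j = i
        · rw [hji, Function.update_self]
        · rw [Function.update_of_ne hji]
          exact hx j (by simp [hji, hj])
      cases h : x i <;> simp only [eval, h, if_true, Bool.false_eq_true, if_false] <;>
        rw [h] at hxi
      exacts [hS x hxi, hT x hxi]
    · rw [Finset.card_insert_of_notMem hi]
      simp only [depth]
      omega

theorem exists_depth_le_card [Fintype ι] (f : (ι → Bool) → Prop) :
    ∃ T : DecisionTree ι, (∀ x, T.eval x = true ↔ f x) ∧ T.depth ≤ Fintype.card ι := by
  obtain ⟨T, hT, hd⟩ := exists_depth_le_card_of_eq_outside f Finset.univ fun _ => false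
  exact ⟨T, fun x => hT x fun i hi => absurd (Finset.mem_univ i) hi, hd⟩

end DecisionTree

/-- The edges of the complete graph on `W`, on which permutations of `W` act. -/
abbrev EdgeSet (W : Type*) := {e : Sym2 W // ¬ e.IsDiag}

/-- The graph whose edges are the members of `A`. -/
def graphOfEdges {W : Type*} (A : Finset (EdgeSet W)) : SimpleGraph W where
  Adj u v := ∃ h : ¬ s(u, v).IsDiag, ⟨s(u, v), h⟩ ∈ A
  symm := ⟨fun u v h => by simpa only [Sym2.eq_swap] using h⟩
  loopless := ⟨fun _ ⟨h, _⟩ => h rfl⟩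

section EdgeSet

open Finset
open scoped Pointwise

variable {W : Type*}

instance : MulAction (Equiv.Perm W) (EdgeSet W) where
  smul σ e := ⟨e.1.map σ, (Sym2.isDiag_map σ.injective).not.2 e.2⟩
  one_smul e := Subtype.ext (congrFun Sym2.map_id e.1)
  mul_smul σ τ e := Subtype.ext (Sym2.map_map (g := σ) (f := τ) e.1).symm

theorem graphOfEdges_bijective [Finite W] : Function.Bijective (graphOfEdges (W := W)) := by
  classical
  have := Fintype.ofFinite W
  constructor
  · intro A B h
    ext ⟨e, he⟩
    induction e with
    | h u v =>
      have huv : (graphOfEdges A).Adj u v ↔ (graphOfEdges B).Adj u v := by rw [h]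
      exact ⟨fun hA => (huv.1 ⟨he, hA⟩).2, fun hB => (huv.2 ⟨he, hB⟩).2⟩
  · intro G
    refine ⟨({e | e.1 ∈ G.edgeSet} : Finset (EdgeSet W)), ?_⟩
    ext u v
    simp only [graphOfEdges, mem_filter, mem_univ, true_and, SimpleGraph.mem_edgeSet]
    exact ⟨fun ⟨_, h⟩ => h, fun h => ⟨h.ne, h⟩⟩

theorem graphOfEdges_mono : Monotone (graphOfEdges (W := W)) :=
  fun _ _ hAB _ _ ⟨hd, hA⟩ => ⟨hd, hAB hA⟩

theorem graphOfEdges_smul [DecidableEq W] (σ : Equiv.Perm W) (A : Finset (EdgeSet W)) :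
    (graphOfEdges (σ • A)).comap σ = graphOfEdges A := by
  ext u v
  have hedge (h : ¬ s(u, v).IsDiag) (h' : ¬ s(σ u, σ v).IsDiag) :
      (⟨s(σ u, σ v), h'⟩ : EdgeSet W) = σ • ⟨s(u, v), h⟩ := rfl
  constructor
  · rintro ⟨h', hA⟩
    have h : ¬ s(u, v).IsDiag := by simpa using h'
    exact ⟨h, by rwa [hedge h h', smul_mem_smul_finset_iff] at hA⟩
  · rintro ⟨h, hA⟩
    have h' : ¬ s(σ u, σ v).IsDiag := by simpa using h
    exact ⟨h', by rwa [hedge h h', smul_mem_smul_finset_iff]⟩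

theorem smul_eq_iff_comap_graphOfEdges_eq [Finite W] [DecidableEq W] (σ : Equiv.Perm W)
    (A : Finset (EdgeSet W)) :
    σ • A = A ↔ (graphOfEdges A).comap σ = graphOfEdges A := by
  constructor
  · intro h
    conv_lhs => rw [← h]
    exact graphOfEdges_smul σ A
  · intro h
    exact graphOfEdges_bijective.1
      ((comap_equiv_bijective σ).1 ((graphOfEdges_smul σ A).trans h.symm))

end EdgeSet

section GraphProperty

open Finset
open scoped Pointwise

theorem graphOfInput_eq_comap_graphOfEdges {W : Type*} [DecidableEq W] {n : ℕ} (e : Fin n ≃ W)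
    (A : Finset (EdgeSet W)) :
    graphOfInput (fun p : EdgeVar n => decide (⟨s(e p.1.1, e p.1.2), by
      simpa using p.2.ne⟩ ∈ A)) = (graphOfEdges A).comap e := by
  ext i j
  simp only [graphOfInput, SimpleGraph.fromRel_adj, decide_eq_true_eq, SimpleGraph.comap_adj]
  constructor
  · rintro ⟨-, ⟨_, hA⟩ | ⟨_, hA⟩⟩
    · exact ⟨_, hA⟩
    · exact SimpleGraph.Adj.symm (G := graphOfEdges A) ⟨_, hA⟩
  · intro h
    have hij : i ≠ j := fun hij => h.ne (congrArg e hij)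
    refine ⟨hij, ?_⟩
    rcases lt_or_gt_of_ne hij with hlt | hlt
    · exact Or.inl ⟨hlt, h.2⟩
    · exact Or.inr ⟨hlt, h.symm.2⟩

theorem even_ncard_invariant_graphs_of_depth_lt {W : Type} {n : ℕ} (e : Fin n ≃ W)
    {𝒬 : Set (SimpleGraph (Fin n))} (h𝒬 : IsLowerSet 𝒬)
    (hiso : ∀ (σ : Equiv.Perm (Fin n)) (G), G.comap σ ∈ 𝒬 ↔ G ∈ 𝒬) {T : DecisionTree (EdgeVar n)}
    (hT : ∀ x, T.eval x = true ↔ graphOfInput x ∈ 𝒬) (hdepth : T.depth < n * (n - 1) / 2)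
    {P : Subgroup (Equiv.Perm W)} (hP : IsPGroup 2 P) {g : Equiv.Perm W}
    (hg : g ∈ Subgroup.normalizer (P : Set (Equiv.Perm W))) :
    Even {G : SimpleGraph W | G.comap e ∈ 𝒬 ∧ (∀ σ ∈ P, G.comap σ = G) ∧ G.comap g = G}.ncard := by
  classical
  let _ : Fintype W := Fintype.ofEquiv _ e
  have hcard : Fintype.card W = n := by simpa using (Fintype.card_congr e).symm
  have hinv (σ : Equiv.Perm W) (A : Finset (EdgeSet W)) :
      (graphOfEdges (σ • A)).comap e ∈ 𝒬 ↔ (graphOfEdges A).comap e ∈ 𝒬 := by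
    rw [← hiso (e.trans (σ.trans e.symm))]
    conv_rhs => rw [← graphOfEdges_smul σ A]
    simp [SimpleGraph.comap_comap, Function.comp_def]
  have key := ModTwoChain.even_ncard_invariant_of_depth_lt
    (Γ := {A : Finset (EdgeSet W) | (graphOfEdges A).comap e ∈ 𝒬})
    (T := T.map fun p => ⟨s(e p.1.1, e p.1.2), by simpa using p.2.ne⟩)
    (fun A B hBA => h𝒬 fun _ _ h => graphOfEdges_mono hBA h) hinv
    (fun A => by
      rw [DecisionTree.eval_map, hT, Set.mem_ofPred_eq, ← graphOfInput_eq_comap_graphOfEdges]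
      rfl)
    (by
      rwa [DecisionTree.depth_map, Sym2.card_subtype_not_diag, hcard, Nat.choose_two_right])
    hP hg
  rw [← Set.ncard_image_of_injective _ graphOfEdges_bijective.1] at key
  convert key using 2
  ext G
  obtain ⟨A, rfl⟩ := graphOfEdges_bijective.2 G
  rw [graphOfEdges_bijective.1.mem_set_image]
  simp only [Set.mem_ofPred_eq, smul_eq_iff_comap_graphOfEdges_eq]

end GraphProperty

section InvariantGraphs

theorem ncard_modEq_ncard_invariant {ι Γ : Type*} [Finite ι] [Group Γ] [Finite Γ]
    (hΓ : IsPGroup 2 Γ) (ρ : Γ →* Equiv.Perm ι) (𝒢 : Set (SimpleGraph ι))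
    (h𝒢 : ∀ γ, ∀ G ∈ 𝒢, G.comap (ρ γ) ∈ 𝒢) :
    𝒢.ncard ≡ {G ∈ 𝒢 | ∀ γ, G.comap (ρ γ) = G}.ncard [MOD 2] := by
  let _ : MulAction Γ 𝒢 :=
    { smul := fun γ G => ⟨G.1.comap (ρ γ⁻¹), h𝒢 γ⁻¹ G.1 G.2⟩
      one_smul := fun G => Subtype.ext (by
        change G.1.comap (ρ 1⁻¹) = G.1
        ext; simp)
      mul_smul := fun γ δ G => Subtype.ext (by
        change G.1.comap (ρ (γ * δ)⁻¹) = (G.1.comap (ρ δ⁻¹)).comap (ρ γ⁻¹)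
        ext; simp [mul_inv_rev, map_mul]) }
  have : Fact (Nat.Prime 2) := ⟨Nat.prime_two⟩
  have hfix (G : 𝒢) : G ∈ MulAction.fixedPoints Γ 𝒢 ↔ ∀ γ, G.1.comap (ρ γ) = G.1 := by
    refine ⟨fun h γ => ?_, fun h γ => Subtype.ext (h γ⁻¹)⟩
    have : G.1.comap (ρ γ⁻¹⁻¹) = G.1 := congrArg Subtype.val (h γ⁻¹)
    rwa [inv_inv] at this
  have hcard : Nat.card (MulAction.fixedPoints Γ 𝒢) =
      {G ∈ 𝒢 | ∀ γ, G.comap (ρ γ) = G}.ncard := by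
    rw [Nat.card_coe_set_eq, ← Set.ncard_image_of_injective _ Subtype.val_injective]
    congr 1
    ext G
    simp only [Set.mem_image, hfix, Set.mem_ofPred_eq]
    exact ⟨by rintro ⟨G, h, rfl⟩; exact ⟨G.2, h⟩, fun h => ⟨⟨G, h.1⟩, h.2, rfl⟩⟩
  rw [← hcard, ← Nat.card_coe_set_eq]
  exact hΓ.card_modEq_card_fixedPoints 𝒢

theorem comap_perm_pow_eq {W : Type*} {G : SimpleGraph W} {g : Equiv.Perm W} (hg : G.comap g = G)
    (k : ℕ) : G.comap (g ^ k : Equiv.Perm W) = G := by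
  induction k with
  | zero => exact SimpleGraph.comap_id
  | succ k ih => rw [pow_succ, Equiv.Perm.coe_mul, ← SimpleGraph.comap_comap, ih, hg]

theorem containsCopy_comap_iff {V W W' : Type} (H : SimpleGraph V) (G : SimpleGraph W')
    (σ : W ≃ W') : ContainsCopy H (G.comap σ) ↔ ContainsCopy H G := by
  constructor
  · rintro ⟨f, hf, h⟩
    exact ⟨σ ∘ f, σ.injective.comp hf, h⟩
  · rintro ⟨f, hf, h⟩
    exact ⟨σ.symm ∘ f, σ.symm.injective.comp hf, fun v w hvw => by simpa using h v w hvw⟩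

theorem ContainsCopy.mono {V W : Type} {H : SimpleGraph V} {G G' : SimpleGraph W} (hGG' : G ≤ G')
    (h : ContainsCopy H G) : ContainsCopy H G' := by
  obtain ⟨f, hf, h⟩ := h
  exact ⟨f, hf, fun v w hvw => hGG' (h v w hvw)⟩

theorem isPGroup_pi {ι : Type*} [Finite ι] {Γ : ι → Type*} [∀ i, Group (Γ i)] {p : ℕ}
    (h : ∀ i, IsPGroup p (Γ i)) : IsPGroup p (∀ i, Γ i) := by
  have := Fintype.ofFinite ι
  rw [isPGroup_iff_pow_pow_eq_one]
  intro g
  choose k hk using fun i => isPGroup_iff_pow_pow_eq_one.1 (h i) (g i)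
  refine ⟨∑ i, k i, funext fun i => ?_⟩
  exact orderOf_dvd_iff_pow_eq_one.1 ((orderOf_dvd_of_pow_eq_one (hk i)).trans
    (pow_dvd_pow p (Finset.single_le_sum (fun _ _ => Nat.zero_le _) (Finset.mem_univ i))))

end InvariantGraphs

section Blocks

variable {B : Type} {F : B → Type} [∀ b, Field (F b)]

/-- The permutation of a disjoint union of fields (the blocks) which acts on the block `b` by
`x ↦ m b * x + c b`. -/
def blockAffine (m : ∀ b, (F b)ˣ) (c : ∀ b, F b) : Equiv.Perm (Σ b, F b) :=
  Equiv.sigmaCongrRight fun b => (Units.mulLeft (m b)).trans (Equiv.addRight (c b))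

theorem blockAffine_mk (m : ∀ b, (F b)ˣ) (c : ∀ b, F b) (b : B) (x : F b) :
    blockAffine m c ⟨b, x⟩ = ⟨b, m b * x + c b⟩ := rfl

theorem blockAffine_mul (m m' : ∀ b, (F b)ˣ) (c c' : ∀ b, F b) :
    blockAffine m c * blockAffine m' c' =
      blockAffine (m * m') (fun b => m b * c' b + c b) := by
  ext1 ⟨b, x⟩
  simp only [Equiv.Perm.mul_apply, blockAffine_mk, Pi.mul_apply, Units.val_mul]
  congr 1
  ring

theorem blockAffine_one_zero : blockAffine (1 : ∀ b, (F b)ˣ) 0 = 1 := by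
  ext1 ⟨b, x⟩
  simp [blockAffine_mk]

theorem blockAffine_inv (m : ∀ b, (F b)ˣ) (c : ∀ b, F b) :
    (blockAffine m c)⁻¹ = blockAffine m⁻¹ fun b => -((m b)⁻¹ * c b : F b) := by
  rw [inv_eq_iff_mul_eq_one, blockAffine_mul, mul_inv_cancel, ← blockAffine_one_zero]
  congr 1
  funext b
  simp

/-- The translations of the blocks in `K`. -/
def blockTranslations (K : Set B) : Subgroup (Equiv.Perm (Σ b, F b)) where
  carrier := {σ | ∃ v : ∀ b, F b, (∀ b ∉ K, v b = 0) ∧ blockAffine 1 v = σ}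
  one_mem' := ⟨0, fun _ _ => rfl, blockAffine_one_zero⟩
  mul_mem' := by
    rintro _ _ ⟨v, hv, rfl⟩ ⟨w, hw, rfl⟩
    refine ⟨w + v, fun b hb => by simp [hv b hb, hw b hb], ?_⟩
    rw [blockAffine_mul, mul_one]
    congr 1
    funext b
    simp
  inv_mem' := by
    rintro _ ⟨v, hv, rfl⟩
    refine ⟨-v, fun b hb => by simp [hv b hb], ?_⟩
    rw [blockAffine_inv, inv_one]
    congr 1
    funext b
    simp

theorem isPGroup_blockTranslations {K : Set B} (htwo : ∀ b ∈ K, (2 : F b) = 0) :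
    IsPGroup 2 (blockTranslations (F := F) K) := by
  rw [isPGroup_iff_pow_pow_eq_one]
  rintro ⟨_, v, hv, rfl⟩
  refine ⟨1, Subtype.ext ?_⟩
  change blockAffine 1 v ^ 2 ^ 1 = 1
  rw [pow_one, sq, blockAffine_mul, mul_one, ← blockAffine_one_zero]
  congr 1
  funext b
  by_cases hb : b ∈ K
  · simp [← two_mul, htwo b hb]
  · simp [hv b hb]

theorem blockAffine_mem_normalizer_blockTranslations [Finite B] [∀ b, Finite (F b)] (K : Set B)
    (m : ∀ b, (F b)ˣ) (c : ∀ b, F b) :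
    blockAffine m c ∈
      Subgroup.normalizer (blockTranslations (F := F) K : Set (Equiv.Perm (Σ b, F b))) := by
  refine Subgroup.mem_normalizer_fintype ?_
  rintro _ ⟨v, hv, rfl⟩
  refine ⟨fun b => m b * v b, fun b hb => by simp [hv b hb], ?_⟩
  rw [eq_mul_inv_iff_mul_eq, blockAffine_mul, blockAffine_mul, one_mul, mul_one]
  congr 1
  funext b
  simp [add_comm]

/-- A graph is block invariant if it is invariant under all blockwise affine maps which are
translations on the blocks outside `K`. -/
def BlockInvariant (K : Set B) (G : SimpleGraph (Σ b, F b)) : Prop :=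
  ∀ (m : ∀ b, (F b)ˣ) (c : ∀ b, F b), (∀ b ∉ K, m b = 1) → G.comap (blockAffine m c) = G

namespace BlockInvariant

variable {K : Set B} {G : SimpleGraph (Σ b, F b)}

theorem comap (hG : BlockInvariant K G) (u : ∀ b, (F b)ˣ) :
    BlockInvariant K (G.comap (blockAffine u 0)) := by
  intro m c hm
  rw [SimpleGraph.comap_comap]
  conv_rhs => rw [← hG m (fun b => u b * c b) hm, SimpleGraph.comap_comap]
  rw [← Equiv.Perm.coe_mul, ← Equiv.Perm.coe_mul, blockAffine_mul, blockAffine_mul, mul_comm m u]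
  simp

theorem adj_of_ne (hG : BlockInvariant K G) {b b' : B} (hb : b ≠ b') {x x' : F b} {y y' : F b'}
    (h : G.Adj ⟨b, x⟩ ⟨b', y⟩) : G.Adj ⟨b, x'⟩ ⟨b', y'⟩ := by
  classical
  rw [← hG 1 (Function.update (Function.update 0 b (x - x')) b' (y - y')) fun _ _ => rfl]
  simpa [blockAffine_mk, hb] using h

theorem adj_affine (hG : BlockInvariant K G) {b : B} (hb : b ∈ K) {x y : F b}
    (h : G.Adj ⟨b, x⟩ ⟨b, y⟩) (m : (F b)ˣ) (c : F b) :
    G.Adj ⟨b, m * x + c⟩ ⟨b, m * y + c⟩ := by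
  classical
  rw [← hG (Function.update 1 b m⁻¹) (Function.update 0 b (-((m⁻¹ : (F b)ˣ) * c)))
    fun b' hb' => Function.update_of_ne (ne_of_mem_of_not_mem hb hb').symm _ _]
  simpa [blockAffine_mk, mul_add] using h

theorem adj_add (hG : BlockInvariant K G) {b : B} {x y : F b} (h : G.Adj ⟨b, x⟩ ⟨b, y⟩)
    (c : F b) : G.Adj ⟨b, x + c⟩ ⟨b, y + c⟩ := by
  classical
  rw [← hG 1 (Function.update 0 b (-c)) fun _ _ => rfl]
  simpa [blockAffine_mk] using h

end BlockInvariant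

theorem exists_natCast_eq [Finite B] [∀ b, Finite (F b)] {S : Set B}
    (hcast : ∀ b ∈ S, Function.Surjective (Nat.cast : ℕ → F b))
    (hcop : S.Pairwise fun b b' => (Nat.card (F b)).Coprime (Nat.card (F b'))) (c : ∀ b, F b) :
    ∃ k : ℕ, ∀ b ∈ S, (k : F b) = c b := by
  classical
  have := Fintype.ofFinite B
  have hex (b : B) : ∃ k : ℕ, b ∈ S → (k : F b) = c b := by
    by_cases hb : b ∈ S
    · exact (hcast b hb (c b)).imp fun _ h _ => h
    · exact ⟨0, fun h => absurd h hb⟩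
  choose a ha using hex
  obtain ⟨k, hk⟩ := Nat.chineseRemainderOfFinset a (fun b => Nat.card (F b)) S.toFinset
    (fun _ _ => Nat.card_pos.ne') (by simpa using hcop)
  refine ⟨k, fun b hb => ?_⟩
  have := Fintype.ofFinite (F b)
  rw [← ha b hb, CharP.natCast_eq_natCast (F b) (ringChar (F b))]
  refine (hk b (Set.mem_toFinset.2 hb)).of_dvd (ringChar.dvd ?_)
  rw [Nat.card_eq_fintype_card, Nat.cast_card_eq_zero]

section Generator

open Classical in
/-- The permutation acting by multiplication by `ζ b` on the blocks in `K` and by `x ↦ x + 1` on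
the other blocks. -/
noncomputable def blockGenerator (K : Set B) (ζ : ∀ b, (F b)ˣ) : Equiv.Perm (Σ b, F b) :=
  blockAffine (K.piecewise ζ 1) (K.piecewise 0 1)

variable {K : Set B}

open Classical in
theorem blockGenerator_pow (ζ : ∀ b, (F b)ˣ) (k : ℕ) :
    blockGenerator K ζ ^ k = blockAffine (K.piecewise (ζ ^ k) 1) (K.piecewise 0 fun _ => k) := by
  induction k with
  | zero =>
    rw [pow_zero, ← blockAffine_one_zero]
    congr 1 <;> funext b <;> by_cases hb : b ∈ K <;> simp [hb]
  | succ k ih =>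
    rw [pow_succ, ih, blockGenerator, blockAffine_mul]
    congr 1 <;> funext b <;> by_cases hb : b ∈ K <;> simp [hb, pow_succ, add_comm]

theorem exists_blockTranslation_mul_blockGenerator_pow [Finite B] [∀ b, Finite (F b)]
    (hcast : ∀ b ∉ K, Function.Surjective (Nat.cast : ℕ → F b))
    (hcop : Kᶜ.Pairwise fun b b' => (Nat.card (F b)).Coprime (Nat.card (F b')))
    {ζ : ∀ b, (F b)ˣ} (hζ : ∀ b m, ∃ k : ℕ, ζ b ^ k = m) {m : ∀ b, (F b)ˣ}
    (hm : ∀ b ∉ K, m b = 1) (c : ∀ b, F b) (w w' : Σ b, F b) :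
    ∃ τ ∈ blockTranslations (F := F) K, ∃ k : ℕ,
      (τ * blockGenerator K ζ ^ k) w = blockAffine m c w ∧
      (τ * blockGenerator K ζ ^ k) w' = blockAffine m c w' := by
  classical
  obtain ⟨b, x⟩ := w
  obtain ⟨b', y⟩ := w'
  by_cases h : b = b' ∧ b ∈ K
  · obtain ⟨rfl, hb⟩ := h
    obtain ⟨k, hk⟩ := hζ b (m b)
    refine ⟨blockAffine 1 (K.piecewise c 0), ⟨_, fun i hi => by simp [hi], rfl⟩, k, ?_⟩
    simp [blockGenerator_pow, blockAffine_mul, blockAffine_mk, hb, ← hk]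
  · obtain ⟨k, hk⟩ := exists_natCast_eq (S := Kᶜ) hcast hcop c
    let z : ∀ i, F i := Function.update (Function.update 0 b x) b' y
    let v : ∀ i, F i := K.piecewise (fun i => m i * z i + c i - ζ i ^ k * z i) 0
    have hv (i : B) (s : F i) (hs : i ∈ K → z i = s) :
        (blockAffine 1 v * blockGenerator K ζ ^ k) ⟨i, s⟩ = blockAffine m c ⟨i, s⟩ := by
      by_cases hi : i ∈ K
      · simp [v, blockGenerator_pow, blockAffine_mul, blockAffine_mk, hi, ← hs hi]
      · simp [v, blockGenerator_pow, blockAffine_mul, blockAffine_mk, hi, hm i hi, hk i hi]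
    refine ⟨blockAffine 1 v, ⟨v, fun i hi => by simp [v, hi], rfl⟩, k, hv b x fun hb => ?_,
      hv b' y fun _ => by simp [z]⟩
    have hbb' : b ≠ b' := fun hbb' => h ⟨hbb', hb⟩
    simp [z, hbb']

theorem blockInvariant_iff [Finite B] [∀ b, Finite (F b)]
    (hcast : ∀ b ∉ K, Function.Surjective (Nat.cast : ℕ → F b))
    (hcop : Kᶜ.Pairwise fun b b' => (Nat.card (F b)).Coprime (Nat.card (F b')))
    {ζ : ∀ b, (F b)ˣ} (hζ : ∀ b m, ∃ k : ℕ, ζ b ^ k = m) {G : SimpleGraph (Σ b, F b)} :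
    BlockInvariant K G ↔
      (∀ τ ∈ blockTranslations K, G.comap τ = G) ∧ G.comap (blockGenerator K ζ) = G := by
  constructor
  · intro h
    refine ⟨?_, h _ _ fun b hb => by simp [hb]⟩
    rintro _ ⟨v, -, rfl⟩
    exact h _ _ fun _ _ => rfl
  · rintro ⟨htrans, hgen⟩ m c hm
    ext w w'
    obtain ⟨τ, hτ, k, h, h'⟩ :=
      exists_blockTranslation_mul_blockGenerator_pow hcast hcop hζ hm c w w'
    rw [SimpleGraph.comap_adj, ← h, ← h', ← SimpleGraph.comap_adj, Equiv.Perm.coe_mul,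
      ← SimpleGraph.comap_comap, htrans τ hτ, comap_perm_pow_eq hgen]

end Generator

end Blocks

section BlockCopies

variable {B : Type} {F : B → Type} [∀ b, Field (F b)]

/-- The action of blockwise multipliers on a disjoint union of fields. -/
def blockMul (U : ∀ b, Subgroup (F b)ˣ) : (∀ b, U b) →* Equiv.Perm (Σ b, F b) where
  toFun u := blockAffine (fun b => u b) 0
  map_one' := blockAffine_one_zero
  map_mul' u u' := by
    rw [blockAffine_mul]
    congr 1
    funext b
    simp

theorem comap_fst_injective :
    Function.Injective (SimpleGraph.comap (Sigma.fst : (Σ b, F b) → B)) := by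
  intro G G' h
  have := congrArg (SimpleGraph.comap fun b => (⟨b, 0⟩ : Σ b, F b)) h
  rwa [SimpleGraph.comap_comap, SimpleGraph.comap_comap] at this

variable {V : Type} {H : SimpleGraph V} {K : Set B} {U : ∀ b, Subgroup (F b)ˣ}
  {G : SimpleGraph (Σ b, F b)}

theorem BlockInvariant.containsCopy_of_adj_of_mem (hG : BlockInvariant K G) {b : B} (hb : b ∈ K)
    {x : V → F b} (hx : Function.Injective x) {u v : F b} (huv : G.Adj ⟨b, u⟩ ⟨b, v⟩) :
    ContainsCopy H G := by
  have huv0 : u - v ≠ 0 := sub_ne_zero.2 fun h => huv.ne (by rw [h])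
  refine ⟨fun i => ⟨b, x i⟩, sigma_mk_injective.comp hx, fun i j hij => ?_⟩
  have hd : (x i - x j) / (u - v) ≠ 0 := div_ne_zero (sub_ne_zero.2 (hx.ne hij.ne)) huv0
  convert hG.adj_affine hb huv (Units.mk0 _ hd) (x i - (x i - x j) / (u - v) * u) using 2
  · simp
  · rw [Units.val_mk0]
    field_simp
    ring

theorem BlockInvariant.containsCopy_of_isDifferenceClique (hG : BlockInvariant K G)
    (hGU : ∀ u, G.comap (blockMul U u) = G) {b : B} {x : V → F b}
    (hx : IsDifferenceClique (U b) x) {u v : F b} (huv : G.Adj ⟨b, u⟩ ⟨b, v⟩) :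
    ContainsCopy H G := by
  classical
  have huv0 : u - v ≠ 0 := sub_ne_zero.2 fun h => huv.ne (by rw [h])
  have hadj {i j : V} {t : (F b)ˣ} (ht : t ∈ U b) (hij : x i - x j = (t : F b)) :
      G.Adj ⟨b, (u - v) * x i⟩ ⟨b, (u - v) * x j⟩ := by
    have htuv : G.Adj ⟨b, t * u⟩ ⟨b, t * v⟩ := by
      rw [← hGU (Function.update 1 b ⟨t, ht⟩⁻¹)]
      simpa [blockMul, blockAffine_mk] using huv
    convert hG.adj_add htuv ((u - v) * x j - t * v) using 2
    · rw [← hij]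
      ring
    · ring
  refine ⟨fun i => ⟨b, (u - v) * x i⟩,
    sigma_mk_injective.comp ((mul_right_injective₀ huv0).comp hx.injective), fun i j hij => ?_⟩
  obtain ⟨t, ht, h | h⟩ := hx hij.ne
  · exact hadj ht h
  · exact (hadj ht h).symm

theorem setOf_blockInvariant_eq_image_comap_fst
    (hK : ∀ b ∈ K, ∃ x : V → F b, Function.Injective x)
    (hU : ∀ b ∉ K, ∃ x : V → F b, IsDifferenceClique (U b) x) :
    {G : SimpleGraph (Σ b, F b) | (¬ ContainsCopy H G ∧ BlockInvariant K G) ∧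
      ∀ u, G.comap (blockMul U u) = G} =
    SimpleGraph.comap Sigma.fst '' {G : SimpleGraph B | IsEmpty (H →g G)} := by
  have hinj (b : B) : ∃ x : V → F b, Function.Injective x := by
    by_cases hb : b ∈ K
    · exact hK b hb
    · exact (hU b hb).imp fun _ => IsDifferenceClique.injective
  choose z hz using hinj
  ext G
  constructor
  · rintro ⟨⟨hH, hG⟩, hGU⟩
    have hblock (b : B) (x y : F b) : ¬ G.Adj ⟨b, x⟩ ⟨b, y⟩ := fun hxy => hH <| by
      by_cases hb : b ∈ K
      · exact hG.containsCopy_of_adj_of_mem hb (hz b) hxy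
      · obtain ⟨x, hx⟩ := hU b hb
        exact hG.containsCopy_of_isDifferenceClique hGU hx hxy
    have hfst : (G.comap fun b => (⟨b, 0⟩ : Σ b, F b)).comap Sigma.fst = G := by
      ext ⟨b, x⟩ ⟨b', y⟩
      by_cases hb : b = b'
      · subst hb
        exact iff_of_false (SimpleGraph.irrefl _) (hblock b x y)
      · exact ⟨hG.adj_of_ne hb, hG.adj_of_ne hb⟩
    refine ⟨_, ⟨fun f => hH ?_⟩, hfst⟩
    refine ⟨fun v => ⟨f v, z (f v) v⟩, fun v w hvw => ?_, fun v w hvw => ?_⟩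
    · have hfw : f v = f w := congrArg Sigma.fst hvw
      have hvw' : (⟨f v, z (f v) v⟩ : Σ b, F b) = ⟨f v, z (f v) w⟩ := hvw.trans (by rw [hfw])
      exact hz _ (by simpa using hvw')
    · exact hfst.le (f.map_adj hvw)
  · rintro ⟨G', hG', rfl⟩
    exact ⟨⟨fun ⟨f, _, hf⟩ => hG'.false ⟨fun v => (f v).1, fun {v w} => hf v w⟩, fun _ _ _ => rfl⟩,
      fun _ => rfl⟩

end BlockCopies

section Evasive

theorem card_edgeVar_le (n : ℕ) [Fintype (EdgeVar n)] :
    Fintype.card (EdgeVar n) ≤ n * (n - 1) / 2 := by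
  let φ (p : EdgeVar n) : EdgeSet (Fin n) := ⟨s(p.1.1, p.1.2), by simpa using p.2.ne⟩
  have hφ : Function.Injective φ := by
    rintro ⟨⟨i, j⟩, hij⟩ ⟨⟨k, l⟩, hkl⟩ h
    rcases Sym2.eq_iff.1 (congrArg Subtype.val h) with ⟨rfl, rfl⟩ | ⟨rfl, rfl⟩
    · rfl
    · exact absurd hij (lt_asymm hkl)
  have hcard := Fintype.card_le_of_injective φ hφ
  rwa [Sym2.card_subtype_not_diag, Fintype.card_fin, Nat.choose_two_right] at hcard

theorem evasive_of_forall_le_depth {n : ℕ} {𝒬 : Set (SimpleGraph (Fin n))}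
    (h : ∀ T : DecisionTree (EdgeVar n), (∀ x, T.eval x = true ↔ graphOfInput x ∈ 𝒬) →
      n * (n - 1) / 2 ≤ T.depth) : Evasive 𝒬 := by
  have : Fintype (EdgeVar n) := inferInstanceAs (Fintype {p : Fin n × Fin n // p.1 < p.2})
  obtain ⟨T, hT, hd⟩ := DecisionTree.exists_depth_le_card fun x => graphOfInput x ∈ 𝒬
  replace hd := hd.trans (card_edgeVar_le n)
  refine le_antisymm (Nat.sInf_le ⟨T, hT, hd⟩) (le_csInf ⟨_, T, hT, hd⟩ ?_)
  rintro d ⟨T, hT, hTd⟩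
  exact (h T hT).trans hTd

theorem isLowerSet_forbiddenSubgraphProperty {V : Type} (H : SimpleGraph V) (n : ℕ) :
    IsLowerSet (ForbiddenSubgraphProperty H n) :=
  fun _ _ hle hG hcopy => hG (hcopy.mono hle)

variable {B : Type} {F : B → Type} [∀ b, Field (F b)] {V : Type}

/-- The conditions on a disjoint union of fields under which graphs on it without a copy of a graph
on `V` can be counted through the affine symmetries of the blocks: those in `K` are large fields of
characteristic two, the others are prime fields of distinct orders containing large cliques of
differences in `2`-groups `U b` of units. -/
structure IsBlockSystem (V : Type) (K : Set B) (U : ∀ b, Subgroup (F b)ˣ) : Prop where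
  two_eq_zero : ∀ b ∈ K, (2 : F b) = 0
  exists_injective : ∀ b ∈ K, ∃ x : V → F b, Function.Injective x
  surjective_natCast : ∀ b ∉ K, Function.Surjective (Nat.cast : ℕ → F b)
  pairwise_coprime : Kᶜ.Pairwise fun b b' => (Nat.card (F b)).Coprime (Nat.card (F b'))
  isPGroup : ∀ b, IsPGroup 2 (U b)
  exists_isDifferenceClique : ∀ b ∉ K, ∃ x : V → F b, IsDifferenceClique (U b) x

variable {H : SimpleGraph V} {K : Set B} {U : ∀ b, Subgroup (F b)ˣ}

theorem IsBlockSystem.odd_ncard_blockInvariant [Fintype B] [∀ b, Finite (F b)] [Fintype V]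
    (hS : IsBlockSystem V K U) (hH : H.edgeSet.Nonempty) {t q : ℕ}
    (ht : Fintype.card V ≤ 2 ^ 2 ^ t) (hB : Fintype.card B = (2 ^ 2 ^ t - 1) * q + 1) :
    Odd {G : SimpleGraph (Σ b, F b) | ¬ ContainsCopy H G ∧ BlockInvariant K G}.ncard := by
  have hmod := ncard_modEq_ncard_invariant (isPGroup_pi hS.isPGroup) (blockMul U)
    {G : SimpleGraph (Σ b, F b) | ¬ ContainsCopy H G ∧ BlockInvariant K G}
    fun u G hG => ⟨fun h => hG.1 ((containsCopy_comap_iff H G _).1 h), hG.2.comap _⟩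
  simp only [Set.mem_ofPred_eq] at hmod
  rw [setOf_blockInvariant_eq_image_comap_fst hS.exists_injective hS.exists_isDifferenceClique,
    Set.ncard_image_of_injective _ comap_fst_injective] at hmod
  rw [Nat.odd_iff, hmod, ← Nat.odd_iff]
  exact odd_ncard_isEmpty_hom hH ht q hB

theorem IsBlockSystem.even_ncard_blockInvariant [Finite B] [∀ b, Finite (F b)]
    (hS : IsBlockSystem V K U) {n : ℕ} (hn : Nat.card (Σ b, F b) = n)
    {T : DecisionTree (EdgeVar n)}
    (hT : ∀ x, T.eval x = true ↔ graphOfInput x ∈ ForbiddenSubgraphProperty H n)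
    (hdepth : T.depth < n * (n - 1) / 2) :
    Even {G : SimpleGraph (Σ b, F b) | ¬ ContainsCopy H G ∧ BlockInvariant K G}.ncard := by
  have e : Fin n ≃ Σ b, F b := (Finite.equivFinOfCardEq hn).symm
  choose ζ hζ using fun b => IsCyclic.exists_monoid_generator (α := (F b)ˣ)
  have key := even_ncard_invariant_graphs_of_depth_lt e (isLowerSet_forbiddenSubgraphProperty H n)
    (fun σ G => (containsCopy_comap_iff H G σ).not) hT hdepth
    (isPGroup_blockTranslations hS.two_eq_zero) (g := blockGenerator K ζ)
    (blockAffine_mem_normalizer_blockTranslations K _ _)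
  simpa only [ForbiddenSubgraphProperty, Set.mem_ofPred_eq, containsCopy_comap_iff,
    ← blockInvariant_iff hS.surjective_natCast hS.pairwise_coprime hζ] using key

theorem IsBlockSystem.evasive [Fintype B] [∀ b, Finite (F b)] [Fintype V]
    (hS : IsBlockSystem V K U) (hH : H.edgeSet.Nonempty) {t q : ℕ}
    (ht : Fintype.card V ≤ 2 ^ 2 ^ t) (hB : Fintype.card B = (2 ^ 2 ^ t - 1) * q + 1) {n : ℕ}
    (hn : Nat.card (Σ b, F b) = n) : Evasive (ForbiddenSubgraphProperty H n) :=
  evasive_of_forall_le_depth fun _ hT => not_lt.1 fun hdepth =>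
    Nat.not_even_iff_odd.2 (hS.odd_ncard_blockInvariant hH ht hB)
      (hS.even_ncard_blockInvariant hn hT hdepth)

end Evasive

section BlockSizes

theorem exists_isBlockSystem (V : Type) [Fintype V] {B₁ B₂ : Type} [Finite B₁] [Finite B₂]
    {e : B₁ → ℕ} {p : B₂ → ℕ} {a : ℕ} (he : ∀ b, e b ≠ 0 ∧ Fintype.card V ≤ 2 ^ e b)
    (hp : ∀ b, IsBlockPrime (Fintype.card V) a (p b)) (hinj : Function.Injective p) :
    ∃ (F : B₁ ⊕ B₂ → Type) (_ : ∀ b, Field (F b)) (U : ∀ b, Subgroup (F b)ˣ),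
      (∀ b, Finite (F b)) ∧ (∀ b, Nat.card (F b) = Sum.elim (fun b => 2 ^ e b) p b) ∧
      IsBlockSystem V (Set.range .inl) U := by
  have hblock (b : B₁ ⊕ B₂) : ∃ (F : Type) (_ : Field F) (U : Subgroup Fˣ), Finite F ∧
      Nat.card F = Sum.elim (fun b => 2 ^ e b) p b ∧ IsPGroup 2 U ∧
      (b ∈ Set.range .inl → (2 : F) = 0) ∧
      (b ∉ Set.range .inl → Function.Surjective (Nat.cast : ℕ → F) ∧
        ∃ x : V → F, IsDifferenceClique U x) := by
    obtain b | b := b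
    · exact ⟨GaloisField 2 (e b), inferInstance, ⊥, inferInstance, GaloisField.card 2 _ (he b).1,
        IsPGroup.of_bot, fun _ => CharTwo.two_eq_zero, fun hb => absurd ⟨b, rfl⟩ hb⟩
    · obtain ⟨hprime, -, U, hU, x, hx⟩ := hp b
      have := Fact.mk hprime
      exact ⟨ZMod (p b), inferInstance, U, inferInstance, Nat.card_zmod _, hU, by simp, fun _ =>
        ⟨ZMod.natCast_zmod_surjective, _, hx.comp_of_injective (Fintype.equivFin V).injective⟩⟩
  choose F _ U hfin hcard hU htwo hcast using hblock
  refine ⟨F, inferInstance, U, hfin, hcard, htwo, fun b hb => ?_, fun b hb => (hcast b hb).1,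
    fun b hb b' hb' hne => ?_, hU, fun b hb => (hcast b hb).2⟩
  · obtain ⟨b, rfl⟩ := hb
    have := Fintype.ofFinite (F (.inl b))
    have hle : Fintype.card V ≤ Fintype.card (F (.inl b)) := by
      rw [← Nat.card_eq_fintype_card (α := F _), hcard]
      exact (he b).2
    exact (Function.Embedding.nonempty_of_card_le hle).elim fun x => ⟨x, x.injective⟩
  · beta_reduce
    rw [hcard, hcard]
    obtain b | b := b
    · exact absurd ⟨b, rfl⟩ hb
    obtain b' | b' := b'
    · exact absurd ⟨b', rfl⟩ hb'
    exact (Nat.coprime_primes (hp b).1 (hp b').1).2 (hinj.ne (by simpa using hne))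

theorem evasive_of_sum_eq {V : Type} [Fintype V] {H : SimpleGraph V} (hH : H.edgeSet.Nonempty)
    {B₁ B₂ : Type} [Fintype B₁] [Fintype B₂] {e : B₁ → ℕ} {p : B₂ → ℕ} {a : ℕ}
    (he : ∀ b, e b ≠ 0 ∧ Fintype.card V ≤ 2 ^ e b)
    (hp : ∀ b, IsBlockPrime (Fintype.card V) a (p b)) (hinj : Function.Injective p)
    {t q : ℕ} (ht : Fintype.card V ≤ 2 ^ 2 ^ t)
    (hB : Fintype.card B₁ + Fintype.card B₂ = (2 ^ 2 ^ t - 1) * q + 1)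
    {n : ℕ} (hn : ∑ b, 2 ^ e b + ∑ b, p b = n) : Evasive (ForbiddenSubgraphProperty H n) := by
  obtain ⟨F, _, U, _, hF, hS⟩ := exists_isBlockSystem V he hp hinj
  refine hS.evasive hH ht (by rwa [Fintype.card_sum]) ?_
  rw [Nat.card_sigma, Fintype.sum_sum_type]
  simpa [hF] using hn

end BlockSizes

section Arithmetic

theorem infinite_isBlockPrime
    (weakChowla : ∀ ε : ℝ, 0 < ε → {p : ℕ | NearFermatPrime ε p}.Infinite)
    {h : ℕ} (hh : 0 < h) (a : ℕ) : {p | IsBlockPrime h a p}.Infinite := by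
  have hε : (0 : ℝ) < 1 / (4 * h : ℕ) := by positivity
  refine ((weakChowla _ hε).sdiff (Set.finite_lt_nat (4 ^ (4 * h) + 4 ^ (a + 1)))).mono ?_
  rintro p ⟨hp, hlt⟩
  have hle : 4 ^ (4 * h) + 4 ^ (a + 1) ≤ p := not_lt.1 hlt
  exact hp.isBlockPrime hh (le_of_add_le_left hle) (le_of_add_le_right hle)

theorem sum_range_modEq {P : ℕ} {r : ℕ → ℕ} (hr : ∀ i, r i ≡ 1 [MOD P]) (j : ℕ) :
    ∑ i ∈ Finset.range j, r i ≡ j [MOD P] := by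
  induction j with
  | zero => rfl
  | succ j ih =>
    rw [Finset.sum_range_succ]
    exact ih.add (hr j)

theorem exists_eq_add_two_mul {T m : ℕ} (hT : 0 < T) (hm : 2 * T ≤ m) (j : ℕ) :
    ∃ u v q, m = u + 2 * v ∧ u + v + j = T * q + 1 := by
  have hv : (m + j + T - 1) % T < T := Nat.mod_lt _ hT
  have hdiv := Nat.div_add_mod (m + j + T - 1) T
  obtain ⟨q, hq⟩ : ∃ q, (m + j + T - 1) / T = q + 1 :=
    Nat.exists_eq_add_of_le' (Nat.div_pos (by omega) hT)
  obtain ⟨u, hu⟩ : ∃ u, m = u + 2 * ((m + j + T - 1) % T) :=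
    Nat.exists_eq_add_of_le' (by omega)
  rw [hq, mul_add, mul_one] at hdiv
  exact ⟨u, _, q, hu, by omega⟩

theorem exists_block_decomposition {P T : ℕ} (hP : 0 < P) (hT : 0 < T) {r : ℕ → ℕ}
    (hr : ∀ i, r i ≡ 1 [MOD P]) {n : ℕ} (hn : ∑ i ∈ Finset.range P, r i + P * (2 * T) ≤ n) :
    ∃ u v j q, u * P + v * (2 * P) + ∑ i ∈ Finset.range j, r i = n ∧ u + v + j = T * q + 1 := by
  have hle : ∑ i ∈ Finset.range (n % P), r i ≤ ∑ i ∈ Finset.range P, r i :=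
    Finset.sum_le_sum_of_subset (Finset.range_mono (Nat.mod_lt n hP).le)
  obtain ⟨m, hm⟩ :=
    (Nat.modEq_iff_dvd' (by omega)).1 ((sum_range_modEq hr (n % P)).trans (Nat.mod_modEq n P))
  have hTm : 2 * T ≤ m := Nat.le_of_mul_le_mul_left (c := P) (by omega) hP
  obtain ⟨u, v, q, hu, hq⟩ := exists_eq_add_two_mul hT hTm (n % P)
  have hPm : P * m = u * P + v * (2 * P) := by
    rw [hu]
    ring
  exact ⟨u, v, n % P, q, by omega, hq⟩

end Arithmetic

/-- Assuming the Weak Chowla Conjecture, for every finite graph `H` with at least one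
edge, the forbidden-subgraph property `Q_n^H` is eventually evasive. -/
theorem forbidden_subgraph_eventually_evasive_of_weakChowla
    (weakChowla : ∀ ε : ℝ, 0 < ε → {p : ℕ | NearFermatPrime ε p}.Infinite)
    {V : Type} [Fintype V] (H : SimpleGraph V) (hH : H.edgeSet.Nonempty) :
    ∃ N : ℕ, ∀ n : ℕ, N ≤ n → Evasive (ForbiddenSubgraphProperty H n) := by
  set h := Fintype.card V
  have hh : 0 < h := Fintype.card_pos_iff.2 (hH.elim fun e _ => ⟨e.out.1⟩)
  have hh2 : h ≤ 2 ^ h := Nat.lt_two_pow_self.le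
  have hT : 0 < 2 ^ 2 ^ h - 1 := Nat.sub_pos_of_lt (Nat.one_lt_two_pow (by positivity))
  let r := (infinite_isBlockPrime weakChowla hh h).natEmbedding
  have hr (i : ℕ) : IsBlockPrime h h (r i) := (r i).2
  refine ⟨∑ i ∈ Finset.range (2 ^ h), (r i : ℕ) + 2 ^ h * (2 * (2 ^ 2 ^ h - 1)), fun n hn => ?_⟩
  obtain ⟨u, v, j, q, hsum, hcard⟩ :=
    exists_block_decomposition (by positivity) hT (fun i => (hr i).2.1) hn
  refine evasive_of_sum_eq hH (B₁ := Fin u ⊕ Fin v) (e := Sum.elim (fun _ => h) fun _ => h + 1)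
    (B₂ := Fin j) (p := fun i => r i) (t := h) (q := q) ?_ (fun i => hr i) ?_ ?_ ?_ ?_
  · rintro (_ | _)
    · exact ⟨hh.ne', hh2⟩
    · exact ⟨h.succ_ne_zero, hh2.trans (Nat.pow_le_pow_right two_pos h.le_succ)⟩
  · exact Subtype.val_injective.comp (r.injective.comp Fin.val_injective)
  · exact hh2.trans (Nat.pow_le_pow_right two_pos hh2)
  · simpa using hcard
  · simpa [Finset.sum_range, pow_succ'] using hsum
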